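/- arXiv:2508.12598 — 3 statements merged into one kernel-verified Lean document; each statement's English description precedes it below -/
import Mathlib

section
/- An element y of s_{n+1} = {y ∈ M_{n+1}(ℂ) : y + conj(y) = 0}, written in block form y = [[y₀, v],[w, d]] with y₀ ∈ s_n, v ∈ i·ℝⁿ (column), w ∈ i·ℝ_n (row), d ∈ i·ℝ, is regular semi-simple (trivial GL_n(ℝ)-stabilizer and Zariski-closed orbit) if and only if ℂ[y₀]·v = ℂⁿ and w·ℂ[y₀] = ℂ_n. -/
open Matrix MeasureTheory

noncomputable section

/-- The space `s_{n+1} = {y ∈ M_{n+1}(ℂ) | y + ȳ = 0}` (entrywise conjugation). -/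
def sSet (n : ℕ) : Set (Matrix (Fin (n+1)) (Fin (n+1)) ℂ) :=
  {y | y + y.map (starRingEnd ℂ) = 0}

/-- The embedding `g ↦ diag(g, 1)` of `n×n` matrices into `(n+1)×(n+1)` matrices. -/
def dgC {n : ℕ} (g : Matrix (Fin n) (Fin n) ℂ) : Matrix (Fin (n+1)) (Fin (n+1)) ℂ :=
  Matrix.reindex finSumFinEquiv finSumFinEquiv
    (Matrix.fromBlocks g 0 0 (1 : Matrix (Fin 1) (Fin 1) ℂ))

/-- The real version of `diag(H, 1)`. -/
def dgR {n : ℕ} (H : Matrix (Fin n) (Fin n) ℝ) : Matrix (Fin (n+1)) (Fin (n+1)) ℝ :=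
  Matrix.reindex finSumFinEquiv finSumFinEquiv
    (Matrix.fromBlocks H 0 0 (1 : Matrix (Fin 1) (Fin 1) ℝ))

/-- The action of `GL_n(ℝ)` on `(n+1)×(n+1)` complex matrices:
`g · y = diag(g,1) y diag(g,1)⁻¹`. -/
def mact {n : ℕ} (g : GL (Fin n) ℝ) (y : Matrix (Fin (n+1)) (Fin (n+1)) ℂ) :
    Matrix (Fin (n+1)) (Fin (n+1)) ℂ :=
  dgC (((g : Matrix (Fin n) (Fin n) ℝ)).map (fun r : ℝ => (r : ℂ))) * y *
    dgC ((((g⁻¹ : GL (Fin n) ℝ) : Matrix (Fin n) (Fin n) ℝ)).map (fun r : ℝ => (r : ℂ)))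

/-- The upper-left `n×n` block `y₀` of `y`. -/
def blk0 {n : ℕ} (y : Matrix (Fin (n+1)) (Fin (n+1)) ℂ) : Matrix (Fin n) (Fin n) ℂ :=
  Matrix.of fun i j => y i.castSucc j.castSucc

/-- The last-column block `v` of `y` (a column vector). -/
def blkv {n : ℕ} (y : Matrix (Fin (n+1)) (Fin (n+1)) ℂ) : Fin n → ℂ :=
  fun i => y i.castSucc (Fin.last n)

/-- The last-row block `w` of `y` (a row vector). -/
def blkw {n : ℕ} (y : Matrix (Fin (n+1)) (Fin (n+1)) ℂ) : Fin n → ℂ :=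
  fun j => y (Fin.last n) j.castSucc

/-- The lower-right entry `d` of `y`. -/
def blkd {n : ℕ} (y : Matrix (Fin (n+1)) (Fin (n+1)) ℂ) : ℂ :=
  y (Fin.last n) (Fin.last n)

/-- The spanning characterization of regular semi-simplicity:
`ℂ[y₀]·v = ℂⁿ` and `w·ℂ[y₀] = ℂ_n`. -/
def RSspan {n : ℕ} (y : Matrix (Fin (n+1)) (Fin (n+1)) ℂ) : Prop :=
  Submodule.span ℂ {u : Fin n → ℂ | ∃ k : ℕ, u = (blk0 y ^ k) *ᵥ blkv y} = ⊤ ∧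
  Submodule.span ℂ {u : Fin n → ℂ | ∃ k : ℕ, u = blkw y ᵥ* (blk0 y ^ k)} = ⊤

/-- The Jacquet–Rallis invariant `Inv(y) = (char(y₀;T), w v, w y₀ v, …, w y₀^{n-1} v, d)`. -/
def InvS {n : ℕ} (y : Matrix (Fin (n+1)) (Fin (n+1)) ℂ) :
    Polynomial ℂ × (Fin n → ℂ) × ℂ :=
  ((blk0 y).charpoly, fun k => blkw y ⬝ᵥ ((blk0 y ^ (k : ℕ)) *ᵥ blkv y), blkd y)

/-- The Lie algebra `u(n+1)` of the compact unitary group: `x* = -x`. -/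
def uSet (n : ℕ) : Set (Matrix (Fin (n+1)) (Fin (n+1)) ℂ) :=
  {x | xᴴ = -x}

/-- Regular semi-simplicity on the unitary side: `ℂ[x₀]·u = ℂⁿ`. -/
def RSspanU {n : ℕ} (x : Matrix (Fin (n+1)) (Fin (n+1)) ℂ) : Prop :=
  Submodule.span ℂ {u : Fin n → ℂ | ∃ k : ℕ, u = (blk0 x ^ k) *ᵥ blkv x} = ⊤

/-- The invariant on the unitary side,
`Inv(x) = (char(x₀;T), -(u,u), …, -(u, x₀^{n-1} u), d)`, with the standard
positive definite hermitian form `(a,b) = star a ⬝ᵥ b`. -/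
def InvU {n : ℕ} (x : Matrix (Fin (n+1)) (Fin (n+1)) ℂ) :
    Polynomial ℂ × (Fin n → ℂ) × ℂ :=
  ((blk0 x).charpoly,
   fun k => -(star (blkv x) ⬝ᵥ ((blk0 x ^ (k : ℕ)) *ᵥ blkv x)),
   blkd x)

/-- `y` matches to signature `(n,0)`: there is a matching regular semi-simple element
of `u(n+1)` (the positive definite case). -/
def MatchesN0 {n : ℕ} (y : Matrix (Fin (n+1)) (Fin (n+1)) ℂ) : Prop :=
  ∃ x ∈ uSet n, RSspanU x ∧ InvS y = InvU x

/-- The real "arrow" matrix with diagonal `(λ₁,…,λₙ,d)` and last row/column `μ₁,…,μₙ`. -/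
def arrow {n : ℕ} (lam mu : Fin n → ℝ) (d : ℝ) : Matrix (Fin (n+1)) (Fin (n+1)) ℝ :=
  Matrix.reindex finSumFinEquiv finSumFinEquiv
    (Matrix.fromBlocks (Matrix.diagonal lam)
      (Matrix.of fun i (_ : Fin 1) => mu i)
      (Matrix.of fun (_ : Fin 1) j => mu j)
      (Matrix.of fun _ _ => d))

/-- `i·A` for a real matrix `A`, viewed inside `M_{n+1}(ℂ)`. -/
def iM {n : ℕ} (A : Matrix (Fin (n+1)) (Fin (n+1)) ℝ) : Matrix (Fin (n+1)) (Fin (n+1)) ℂ :=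
  Complex.I • (A.map fun r : ℝ => (r : ℂ))

/-- The element `i·M` of `s_{n+1}` attached to arrow data. -/
def iArrow {n : ℕ} (lam mu : Fin n → ℝ) (d : ℝ) : Matrix (Fin (n+1)) (Fin (n+1)) ℂ :=
  iM (arrow lam mu d)

/-- A real-valued polynomial function on a real vector space: an element of the
subalgebra of functions generated by the linear functionals. -/
def IsPolyFun {V : Type*} [AddCommGroup V] [Module ℝ V] (f : V → ℝ) : Prop :=
  f ∈ Algebra.adjoin ℝ (Set.range fun l : V →ₗ[ℝ] ℝ => ⇑l)

/-- Zariski-closed subsets of a real vector space: common zero loci of families of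
polynomial functions. -/
def IsRZClosed {V : Type*} [AddCommGroup V] [Module ℝ V] (s : Set V) : Prop :=
  ∃ T : Set (V → ℝ), (∀ f ∈ T, IsPolyFun f) ∧ s = {x | ∀ f ∈ T, f x = 0}

/-- Regular semi-simplicity as defined in the paper: trivial `GL_n(ℝ)`-stabilizer
and Zariski-closed orbit. -/
def RSdef {n : ℕ} (y : Matrix (Fin (n+1)) (Fin (n+1)) ℂ) : Prop :=
  (∀ g : GL (Fin n) ℝ, mact g y = y → g = 1) ∧
  IsRZClosed {z | ∃ g : GL (Fin n) ℝ, z = mact g y}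

/-- The set `𝔖` of regular semi-simple elements of `s_{n+1}` matching signature `(n,0)`. -/
def frakS (n : ℕ) : Set (Matrix (Fin (n+1)) (Fin (n+1)) ℂ) :=
  {y | y ∈ sSet n ∧ RSspan y ∧ MatchesN0 y}


/-- Real block matrix `[[A, v], [w, d]]`. -/
def blkB {n : ℕ} (A : Matrix (Fin n) (Fin n) ℝ) (v w : Fin n → ℝ) (d : ℝ) :
    Matrix (Fin (n+1)) (Fin (n+1)) ℝ :=
  Matrix.reindex finSumFinEquiv finSumFinEquiv
    (Matrix.fromBlocks A (Matrix.replicateCol (Fin 1) v) (Matrix.replicateRow (Fin 1) w)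
      (Matrix.of fun _ _ => d))

/-- Krylov condition. -/
def KC {n : ℕ} (A : Matrix (Fin n) (Fin n) ℝ) (v : Fin n → ℝ) : Prop :=
  ∀ φ : Fin n → ℝ, (∀ k : ℕ, φ ⬝ᵥ (A ^ k *ᵥ v) = 0) → φ = 0

/-- Krylov matrix. -/
def Kry {n : ℕ} (A : Matrix (Fin n) (Fin n) ℝ) (v : Fin n → ℝ) : Matrix (Fin n) (Fin n) ℝ :=
  Matrix.of fun i j => (A ^ (j : ℕ) *ᵥ v) i

lemma span_top_iff {n : ℕ} (S : Set (Fin n → ℂ)) :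
    Submodule.span ℂ S = ⊤ ↔ ∀ φ : Fin n → ℂ, (∀ u ∈ S, φ ⬝ᵥ u = 0) → φ = 0 := by
  constructor
  · intro h φ hφ
    have h2 : ∀ u ∈ Submodule.span ℂ S, φ ⬝ᵥ u = 0 := by
      intro u hu
      induction hu using Submodule.span_induction with
      | mem x hx => exact hφ x hx
      | zero => simp
      | add x y _ _ hx hy => simp [dotProduct_add, hx, hy]
      | smul a x _ hx => simp [dotProduct_smul, hx]
    apply dotProduct_eq_zero
    intro u
    exact h2 u (h ▸ Submodule.mem_top)
  · intro h
    by_contra hne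
    obtain ⟨f, hf, hk⟩ := Submodule.exists_le_ker_of_lt_top _ (lt_top_iff_ne_top.2 hne)
    apply hf
    have key : ∀ u, f u = (fun i => f (Pi.single i 1)) ⬝ᵥ u := by
      intro u
      conv_lhs => rw [pi_eq_sum_univ' u]
      simp [dotProduct, mul_comm]
    have := h _ (fun u hu => by rw [← key]; exact hk (Submodule.subset_span hu))
    ext u
    simpa using congrFun this u

lemma map_pow_ofReal {n : ℕ} (A : Matrix (Fin n) (Fin n) ℝ) (k : ℕ) :
    (A.map (fun r : ℝ => (r : ℂ))) ^ k = (A ^ k).map (fun r : ℝ => (r : ℂ)) := by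
  have := map_pow (Complex.ofRealHom.mapMatrix (m := Fin n)) A k
  exact this.symm

lemma map_mulVec_ofReal {n : ℕ} (A : Matrix (Fin n) (Fin n) ℝ) (v : Fin n → ℝ) :
    (A.map (fun r : ℝ => (r : ℂ))) *ᵥ (fun i => (v i : ℂ)) = fun i => ((A *ᵥ v) i : ℂ) := by
  ext i; simp [mulVec, dotProduct]

lemma span_iff_KC {n : ℕ} (A : Matrix (Fin n) (Fin n) ℝ) (v : Fin n → ℝ) :
    Submodule.span ℂ {u : Fin n → ℂ | ∃ k : ℕ,
      u = ((Complex.I • A.map (fun r : ℝ => (r : ℂ))) ^ k) *ᵥ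
        (Complex.I • (fun i => (v i : ℂ)))} = ⊤ ↔ KC A v := by
  have hu : ∀ k : ℕ, ((Complex.I • A.map (fun r : ℝ => (r : ℂ))) ^ k) *ᵥ
        (Complex.I • (fun i => (v i : ℂ))) =
        Complex.I ^ (k+1) • (fun i => ((A ^ k *ᵥ v) i : ℂ)) := by
    intro k
    rw [smul_pow, map_pow_ofReal, smul_mulVec, mulVec_smul, map_mulVec_ofReal, smul_smul, pow_succ]
  have hI : ∀ k : ℕ, Complex.I ^ k ≠ 0 := fun k => pow_ne_zero _ Complex.I_ne_zero
  rw [span_top_iff]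
  have e : ∀ φ : Fin n → ℂ, (∀ u ∈ {u : Fin n → ℂ | ∃ k : ℕ,
      u = ((Complex.I • A.map (fun r : ℝ => (r : ℂ))) ^ k) *ᵥ
        (Complex.I • (fun i => (v i : ℂ)))}, φ ⬝ᵥ u = 0) ↔
      ∀ k : ℕ, φ ⬝ᵥ (fun i => ((A ^ k *ᵥ v) i : ℂ)) = 0 := by
    intro φ
    constructor
    · intro h k
      have := h _ ⟨k, rfl⟩
      rw [hu, dotProduct_smul, smul_eq_mul] at this
      exact (mul_eq_zero.1 this).resolve_left (hI _)
    · rintro h u ⟨k, rfl⟩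
      rw [hu, dotProduct_smul, h, smul_zero]
  simp only [e]
  constructor
  · intro h φ hφ
    have := h (fun i => (φ i : ℂ)) (fun k => by
      have := hφ k
      simp only [dotProduct] at this ⊢
      exact_mod_cast this)
    ext i
    have := congrFun this i
    simpa using this
  · intro h φ hφ
    have h1 := h (fun i => (φ i).re) (fun k => by
      have := congrArg Complex.re (hφ k)
      simpa [dotProduct] using this)
    have h2 := h (fun i => (φ i).im) (fun k => by
      have := congrArg Complex.im (hφ k)
      simpa [dotProduct] using this)
    ext i
    exact Complex.ext (congrFun h1 i) (congrFun h2 i)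

lemma KC.det_ne {n : ℕ} {A : Matrix (Fin n) (Fin n) ℝ} {v : Fin n → ℝ} (h : KC A v) :
    (Kry A v).det ≠ 0 := by
  intro h0
  obtain ⟨φ, hne, hφ⟩ := Matrix.exists_vecMul_eq_zero_iff.2 h0
  apply hne
  apply h
  have hj : ∀ j < n, φ ⬝ᵥ (A ^ j *ᵥ v) = 0 := by
    intro j hj
    have := congrFun hφ ⟨j, hj⟩
    simpa [vecMul, Kry, dotProduct] using this
  intro k
  have hn : n ≠ 0 := by
    rintro rfl
    exact hne (Subsingleton.elim _ _)
  rw [Matrix.pow_eq_aeval_mod_charpoly, Polynomial.aeval_eq_sum_range' (n := n)]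
  · rw [Matrix.sum_mulVec, dotProduct_sum]
    refine Finset.sum_eq_zero fun j hj' => ?_
    rw [smul_mulVec, dotProduct_smul, hj j (Finset.mem_range.1 hj'), smul_zero]
  · have h1 := Polynomial.natDegree_modByMonic_lt (Polynomial.X ^ k : Polynomial ℝ)
      A.charpoly_monic (by
        intro h1
        have := A.charpoly_natDegree_eq_dim
        rw [h1] at this
        simp at this
        exact hn this.symm)
    rwa [A.charpoly_natDegree_eq_dim, Fintype.card_fin] at h1

lemma not_KC {n : ℕ} {A : Matrix (Fin n) (Fin n) ℝ} {v : Fin n → ℝ} (h : ¬ KC A v) :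
    ∃ E : Matrix (Fin n) (Fin n) ℝ, E * E = E ∧ E ≠ 1 ∧ (1 - E) * A * E = 0 ∧ E *ᵥ v = v := by
  unfold KC at h
  push Not at h
  obtain ⟨φ, hφ, hne⟩ := h
  let U : Submodule ℝ (Fin n → ℝ) := Submodule.span ℝ {u | ∃ k : ℕ, u = A ^ k *ᵥ v}
  obtain ⟨Q, hQ⟩ := U.exists_isCompl
  let P := U.projection Q hQ
  have hPU : ∀ x ∈ U, P x = x := fun x hx => Submodule.projection_apply_of_mem_left hQ hx
  have hPm : ∀ x, P x ∈ U := fun x => Submodule.projection_apply_mem hQ x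
  have hAU : ∀ x ∈ U, A *ᵥ x ∈ U := by
    intro x hx
    induction hx using Submodule.span_induction with
    | mem x hx =>
      obtain ⟨k, rfl⟩ := hx
      exact Submodule.subset_span ⟨k+1, by rw [mulVec_mulVec, ← pow_succ']⟩
    | zero => simp
    | add x y _ _ hx hy => rw [mulVec_add]; exact add_mem hx hy
    | smul a x _ hx => rw [mulVec_smul]; exact Submodule.smul_mem _ _ hx
  have hφU : ∀ x ∈ U, φ ⬝ᵥ x = 0 := by
    intro x hx
    induction hx using Submodule.span_induction with
    | mem x hx =>
      obtain ⟨k, rfl⟩ := hx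
      exact hφ k
    | zero => simp
    | add x y _ _ hx hy => simp [dotProduct_add, hx, hy]
    | smul a x _ hx => simp [dotProduct_smul, hx]
  have hE : ∀ x, LinearMap.toMatrix' P *ᵥ x = P x := fun x => by
    rw [← Matrix.toLin'_apply, Matrix.toLin'_toMatrix']
  refine ⟨LinearMap.toMatrix' P, ?_, ?_, ?_, ?_⟩
  · apply Matrix.ext_of_mulVec_single
    intro i
    rw [← mulVec_mulVec, hE, hE, hPU _ (hPm _)]
  · intro h1
    apply hne
    apply dotProduct_eq_zero
    intro x
    apply hφU
    have := hE x
    rw [h1, one_mulVec] at this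
    rw [this]; exact hPm x
  · apply Matrix.ext_of_mulVec_single
    intro i
    rw [← mulVec_mulVec, ← mulVec_mulVec, sub_mulVec, one_mulVec, hE, hE,
      hPU _ (hAU _ (hPm _)), sub_self, zero_mulVec]
  · rw [hE]
    exact hPU _ (Submodule.subset_span ⟨0, by simp⟩)

lemma poly_line {V : Type*} [AddCommGroup V] [Module ℝ V] {f : V → ℝ} (hf : IsPolyFun f)
    (a b : V) : ∃ p : Polynomial ℝ, ∀ s : ℝ, f (a + s • b) = p.eval s := by
  unfold IsPolyFun at hf
  induction hf using Algebra.adjoin_induction with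
  | mem x hx =>
    obtain ⟨l, rfl⟩ := hx
    exact ⟨Polynomial.C (l a) + Polynomial.X * Polynomial.C (l b), fun s => by simp; ring⟩
  | algebraMap r => exact ⟨Polynomial.C r, fun s => by simp⟩
  | add x y _ _ hx hy =>
    obtain ⟨p, hp⟩ := hx
    obtain ⟨q, hq⟩ := hy
    exact ⟨p + q, fun s => by simp [hp, hq]⟩
  | mul x y _ _ hx hy =>
    obtain ⟨p, hp⟩ := hx
    obtain ⟨q, hq⟩ := hy
    exact ⟨p * q, fun s => by simp [hp, hq]⟩

lemma closed_line {V : Type*} [AddCommGroup V] [Module ℝ V] {S : Set V} (hS : IsRZClosed S)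
    (a b : V) (h : ∀ s : ℝ, s ≠ 0 → a + s • b ∈ S) : a ∈ S := by
  obtain ⟨T, hT, rfl⟩ := hS
  intro f hf
  obtain ⟨p, hp⟩ := poly_line (hT f hf) a b
  have hp0 : p = 0 := by
    refine Polynomial.eq_zero_of_infinite_isRoot p ?_
    refine Set.Infinite.mono (s := {0}ᶜ) ?_ (Set.finite_singleton (0:ℝ)).infinite_compl
    intro s hs
    have := h s hs f hf
    rw [hp] at this
    exact this
  have := hp 0
  simpa [hp0] using this

lemma dgR_conj {n : ℕ} (g h A : Matrix (Fin n) (Fin n) ℝ) (v w : Fin n → ℝ) (d : ℝ) :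
    dgR g * blkB A v w d * dgR h = blkB (g * A * h) (g *ᵥ v) (w ᵥ* h) d := by
  unfold dgR blkB
  simp only [reindex_apply, submatrix_mul_equiv, fromBlocks_multiply]
  congr 2
  · simp
  · simp [replicateCol_mulVec]
  · simp [replicateRow_vecMul]
  · simp

lemma dgC_map {n : ℕ} (g : Matrix (Fin n) (Fin n) ℝ) :
    dgC (g.map (fun r : ℝ => (r : ℂ))) = (dgR g).map (fun r : ℝ => (r : ℂ)) := by
  unfold dgC dgR
  ext i j
  simp only [reindex_apply, submatrix_apply, map_apply]
  rcases finSumFinEquiv.symm i with i | i <;> rcases finSumFinEquiv.symm j with j | j <;>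
    simp [one_apply, apply_ite Complex.ofReal]

lemma iM_inj {n : ℕ} {X Y : Matrix (Fin (n+1)) (Fin (n+1)) ℝ} (h : iM X = iM Y) : X = Y := by
  ext i j
  have := congrFun (congrFun h i) j
  simpa [iM] using this

lemma mact_iM {n : ℕ} (g : GL (Fin n) ℝ) (Y : Matrix (Fin (n+1)) (Fin (n+1)) ℝ) :
    mact g (iM Y) = iM (dgR (g : Matrix (Fin n) (Fin n) ℝ) * Y *
      dgR ((g⁻¹ : GL (Fin n) ℝ) : Matrix (Fin n) (Fin n) ℝ)) := by
  unfold mact iM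
  rw [dgC_map, dgC_map, mul_smul_comm, smul_mul_assoc]
  congr 1
  have h : ∀ P Q : Matrix (Fin (n+1)) (Fin (n+1)) ℝ,
    (P * Q).map (fun r : ℝ => (r : ℂ)) = P.map (fun r : ℝ => (r : ℂ)) *
      Q.map (fun r : ℝ => (r : ℂ)) := fun P Q => map_mul (Complex.ofRealHom.mapMatrix) P Q
  rw [h, h]

lemma blkB_cc {n : ℕ} (A : Matrix (Fin n) (Fin n) ℝ) (v w : Fin n → ℝ) (d : ℝ) (i j : Fin n) :
    blkB A v w d i.castSucc j.castSucc = A i j := by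
  simp [blkB]
lemma blkB_cl {n : ℕ} (A : Matrix (Fin n) (Fin n) ℝ) (v w : Fin n → ℝ) (d : ℝ) (i : Fin n) :
    blkB A v w d i.castSucc (Fin.last n) = v i := by
  simp [blkB]
lemma blkB_lc {n : ℕ} (A : Matrix (Fin n) (Fin n) ℝ) (v w : Fin n → ℝ) (d : ℝ) (i : Fin n) :
    blkB A v w d (Fin.last n) i.castSucc = w i := by
  simp [blkB]
lemma blkB_ll {n : ℕ} (A : Matrix (Fin n) (Fin n) ℝ) (v w : Fin n → ℝ) (d : ℝ) :
    blkB A v w d (Fin.last n) (Fin.last n) = d := by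
  simp [blkB]

/-- Blocks of the imaginary part. -/
def imA {n : ℕ} (z : Matrix (Fin (n+1)) (Fin (n+1)) ℂ) : Matrix (Fin n) (Fin n) ℝ :=
  Matrix.of fun i j => (z i.castSucc j.castSucc).im
def imv {n : ℕ} (z : Matrix (Fin (n+1)) (Fin (n+1)) ℂ) : Fin n → ℝ :=
  fun i => (z i.castSucc (Fin.last n)).im
def imw {n : ℕ} (z : Matrix (Fin (n+1)) (Fin (n+1)) ℂ) : Fin n → ℝ :=
  fun i => (z (Fin.last n) i.castSucc).im
def imd {n : ℕ} (z : Matrix (Fin (n+1)) (Fin (n+1)) ℂ) : ℝ :=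
  (z (Fin.last n) (Fin.last n)).im

lemma eq_iM {n : ℕ} (z : Matrix (Fin (n+1)) (Fin (n+1)) ℂ) (h : ∀ i j, (z i j).re = 0) :
    z = iM (blkB (imA z) (imv z) (imw z) (imd z)) := by
  ext i j
  apply Complex.ext
  · simp [iM, h]
  · refine Fin.lastCases ?_ (fun i => ?_) i <;> refine Fin.lastCases ?_ (fun j => ?_) j <;>
      simp [iM, blkB_cc, blkB_cl, blkB_lc, blkB_ll, imA, imv, imw, imd]

section
variable {n : ℕ} (A : Matrix (Fin n) (Fin n) ℝ) (v w : Fin n → ℝ) (d : ℝ)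

lemma imA_iM : imA (iM (blkB A v w d)) = A := by ext; simp [imA, iM, blkB_cc]
lemma imv_iM : imv (iM (blkB A v w d)) = v := by ext; simp [imv, iM, blkB_cl]
lemma imw_iM : imw (iM (blkB A v w d)) = w := by ext; simp [imw, iM, blkB_lc]
lemma imd_iM : imd (iM (blkB A v w d)) = d := by simp [imd, iM, blkB_ll]

lemma RSspan_iff : RSspan (iM (blkB A v w d)) ↔ KC A v ∧ KC Aᵀ w := by
  have h0 : blk0 (iM (blkB A v w d)) = Complex.I • A.map (fun r : ℝ => (r : ℂ)) := by
    ext; simp [blk0, iM, blkB_cc]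
  have hv : blkv (iM (blkB A v w d)) = Complex.I • (fun i => (v i : ℂ)) := by
    ext; simp [blkv, iM, blkB_cl]
  have hw : blkw (iM (blkB A v w d)) = Complex.I • (fun i => (w i : ℂ)) := by
    ext; simp [blkw, iM, blkB_lc]
  unfold RSspan
  rw [h0, hv, hw, ← span_iff_KC, ← span_iff_KC]
  have : ∀ k : ℕ, (Complex.I • (fun i => (w i : ℂ))) ᵥ*
      (Complex.I • A.map (fun r : ℝ => (r : ℂ))) ^ k =
      ((Complex.I • Aᵀ.map (fun r : ℝ => (r : ℂ))) ^ k) *ᵥ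
        (Complex.I • (fun i => (w i : ℂ))) := by
    intro k
    rw [← mulVec_transpose, transpose_pow, transpose_smul, transpose_map]
  simp only [this]
end

lemma inv_pair {n : ℕ} {E : Matrix (Fin n) (Fin n) ℝ} (hE : E * E = E) {t s : ℝ}
    (h : t * s = 1) : (E + t • (1 - E)) * (E + s • (1 - E)) = 1 := by
  have h1 : E * (1 - E) = 0 := by rw [mul_sub, hE]; simp
  have h2 : (1 - E) * E = 0 := by rw [sub_mul, hE]; simp
  have h3 : (1 - E) * (1 - E) = 1 - E := by rw [mul_sub, h2]; simp
  rw [add_mul, mul_add, mul_add, hE, mul_smul_comm, h1, smul_mul_assoc, smul_mul_assoc, h2,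
    mul_smul_comm, h3, smul_smul, h]
  simp

/-- The element `E + t (1 - E)` of `GL_n`. -/
def glE {n : ℕ} (E : Matrix (Fin n) (Fin n) ℝ) (hE : E * E = E) (t s : ℝ) (h : t * s = 1) :
    GL (Fin n) ℝ :=
  ⟨E + t • (1 - E), E + s • (1 - E), inv_pair hE h, inv_pair hE (by rw [mul_comm, h])⟩

lemma mact_mul {n : ℕ} (g h : GL (Fin n) ℝ) (Y : Matrix (Fin (n+1)) (Fin (n+1)) ℝ) :
    mact (g * h) (iM Y) = mact g (mact h (iM Y)) := by
  rw [mact_iM, mact_iM, mact_iM]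
  have : ∀ a b : Matrix (Fin n) (Fin n) ℝ, dgR (a * b) = dgR a * dgR b := by
    intro a b
    simp [dgR, fromBlocks_multiply]
  simp only [_root_.mul_inv_rev, Units.val_mul, this, mul_assoc]

lemma not_RS_of_limit {n : ℕ} {E A : Matrix (Fin n) (Fin n) ℝ} {v w : Fin n → ℝ} {d : ℝ}
    (hE : E * E = E) (hE1 : E ≠ 1) (X : Matrix (Fin (n+1)) (Fin (n+1)) ℝ)
    (hX : ∀ s : ℝ, s ≠ 0 → ∃ g : GL (Fin n) ℝ, mact g (iM (blkB A v w d)) =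
      iM (blkB (E * A * E + (1 - E) * A * (1 - E)) (E *ᵥ v) (w ᵥ* E) d + s • X)) :
    ¬ RSdef (iM (blkB A v w d)) := by
  rintro ⟨hst, hcl⟩
  have h1 : E * (1 - E) = 0 := by rw [mul_sub, hE]; simp
  have h2 : (1 - E) * E = 0 := by rw [sub_mul, hE]; simp
  have h3 : (1 - E) * (1 - E) = 1 - E := by rw [mul_sub, h2]; simp
  obtain ⟨g, hg⟩ := closed_line hcl
    (iM (blkB (E * A * E + (1 - E) * A * (1 - E)) (E *ᵥ v) (w ᵥ* E) d)) (iM X) (by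
      intro s hs
      obtain ⟨g, hg⟩ := hX s hs
      refine ⟨g, ?_⟩
      rw [hg]
      ext i j
      simp [iM]
      ring)
  let c := glE E hE 2 (1/2) (by norm_num)
  have hc : mact c (iM (blkB (E * A * E + (1 - E) * A * (1 - E)) (E *ᵥ v) (w ᵥ* E) d)) =
      iM (blkB (E * A * E + (1 - E) * A * (1 - E)) (E *ᵥ v) (w ᵥ* E) d) := by
    rw [mact_iM, dgR_conj]
    have hc1 : (c : Matrix (Fin n) (Fin n) ℝ) = E + (2:ℝ) • (1 - E) := rfl
    have hc2 : ((c⁻¹ : GL (Fin n) ℝ) : Matrix (Fin n) (Fin n) ℝ) = E + (1/2:ℝ) • (1 - E) := rfl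
    have l1 : (E + (2:ℝ) • (1 - E)) * E = E := by
      rw [add_mul, smul_mul_assoc, h2, hE]; simp
    have l2 : (E + (2:ℝ) • (1 - E)) * (1 - E) = (2:ℝ) • (1 - E) := by
      rw [add_mul, smul_mul_assoc, h1, h3]; simp
    have r1 : E * (E + (1/2:ℝ) • (1 - E)) = E := by
      rw [mul_add, mul_smul_comm, h1, hE]; simp
    have r2 : (1 - E) * (E + (1/2:ℝ) • (1 - E)) = (1/2:ℝ) • (1 - E) := by
      rw [mul_add, mul_smul_comm, h2, h3]; simp
    rw [hc1, hc2]
    congr 2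
    · have a1 : (E + (2:ℝ) • (1 - E)) * (E * A * E) * (E + (1/2:ℝ) • (1 - E)) = E * A * E := by
        rw [← mul_assoc, ← mul_assoc, l1, mul_assoc _ E, r1]
      have a2 : (E + (2:ℝ) • (1 - E)) * ((1 - E) * A * (1 - E)) * (E + (1/2:ℝ) • (1 - E)) =
          (1 - E) * A * (1 - E) := by
        rw [← mul_assoc, ← mul_assoc, l2, mul_assoc _ (1 - E), r2, smul_mul_assoc,
          smul_mul_assoc, mul_smul_comm, smul_smul]
        norm_num
      rw [mul_add _ (E * A * E), add_mul _ _ (E + (1/2:ℝ) • (1 - E)), a1, a2]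
    · rw [mulVec_mulVec, l1]
    · rw [vecMul_vecMul, r1]
  have h := hst (g⁻¹ * (c * g)) (by
    rw [mact_mul, mact_mul, ← hg, hc, hg, ← mact_mul, inv_mul_cancel, mact_iM, dgR_conj]
    simp)
  have hc1 : c = 1 := by
    rw [inv_mul_eq_one] at h
    exact (mul_eq_right.1 h.symm)
  have hc2 : E + (2:ℝ) • (1 - E) = 1 := congrArg Units.val hc1
  apply hE1
  have : (1 - E) + (E + (2:ℝ) • (1 - E) - 1) = (2:ℝ) • (1 - E) := by module
  have h5 : (1 : Matrix (Fin n) (Fin n) ℝ) - E = 0 := by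
    have : (1 - E) = (E + (2:ℝ) • (1 - E) - 1) := by module
    rw [this, hc2, sub_self]
  exact (sub_eq_zero.1 h5).symm

lemma conj_exp {n : ℕ} (E F A : Matrix (Fin n) (Fin n) ℝ) (t s : ℝ) (h : t * s = 1) :
    (E + t • F) * A * (E + s • F) = E * A * E + F * A * F + s • (E * A * F) + t • (F * A * E) := by
  simp only [add_mul, mul_add, smul_mul_assoc, mul_smul_comm, smul_add, smul_smul]
  rw [mul_comm s t, h]
  module

lemma blkB_add {n : ℕ} (A A' : Matrix (Fin n) (Fin n) ℝ) (v w v' w' : Fin n → ℝ) (d s : ℝ) :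
    blkB A v w d + s • blkB A' v' w' 0 = blkB (A + s • A') (v + s • v') (w + s • w') d := by
  ext i j
  refine Fin.lastCases ?_ (fun i => ?_) i <;> refine Fin.lastCases ?_ (fun j => ?_) j <;>
      simp [blkB_cc, blkB_cl, blkB_lc, blkB_ll]

lemma KC_of_RSdef {n : ℕ} {A : Matrix (Fin n) (Fin n) ℝ} {v w : Fin n → ℝ} {d : ℝ}
    (h : RSdef (iM (blkB A v w d))) : KC A v ∧ KC Aᵀ w := by
  constructor
  · by_contra hK
    obtain ⟨E, hE, hE1, hA, hv⟩ := not_KC hK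
    refine not_RS_of_limit hE hE1 (blkB (E * A * (1 - E)) 0 (w ᵥ* (1 - E)) 0) ?_ h
    intro s hs
    refine ⟨glE E hE s⁻¹ s (inv_mul_cancel₀ hs), ?_⟩
    rw [mact_iM, dgR_conj, blkB_add]
    change iM (blkB ((E + s⁻¹ • (1 - E)) * A * (E + s • (1 - E))) ((E + s⁻¹ • (1 - E)) *ᵥ v)
      (w ᵥ* (E + s • (1 - E))) d) = _
    rw [conj_exp _ _ _ _ _ (inv_mul_cancel₀ hs), hA]
    congr 2
    · simp
    · rw [add_mulVec, smul_mulVec, sub_mulVec, hv]; simp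
    · rw [vecMul_add, vecMul_smul]
  · by_contra hK
    obtain ⟨E', hE', hE1', hA', hw'⟩ := not_KC hK
    obtain ⟨E, rfl⟩ : ∃ E, E' = Eᵀ := ⟨E'ᵀ, by simp⟩
    have hE : E * E = E := by
      apply transpose_injective; rw [transpose_mul, hE']
    have hE1 : E ≠ 1 := by
      rintro rfl; simp at hE1'
    have hA : E * A * (1 - E) = 0 := by
      apply transpose_injective
      rw [transpose_mul, transpose_mul, transpose_sub, transpose_one, ← mul_assoc, hA',
        transpose_zero]
    have hw : w ᵥ* E = w := by rw [← mulVec_transpose, hw']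
    refine not_RS_of_limit hE hE1 (blkB ((1 - E) * A * E) ((1 - E) *ᵥ v) 0 0) ?_ h
    intro s hs
    refine ⟨glE E hE s s⁻¹ (mul_inv_cancel₀ hs), ?_⟩
    rw [mact_iM, dgR_conj, blkB_add]
    change iM (blkB ((E + s • (1 - E)) * A * (E + s⁻¹ • (1 - E))) ((E + s • (1 - E)) *ᵥ v)
      (w ᵥ* (E + s⁻¹ • (1 - E))) d) = _
    rw [conj_exp _ _ _ _ _ (mul_inv_cancel₀ hs), hA]
    congr 2
    · simp
    · rw [add_mulVec, smul_mulVec]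
    · rw [vecMul_add, vecMul_smul, vecMul_sub, hw]; simp

lemma kry_T {n : ℕ} (A : Matrix (Fin n) (Fin n) ℝ) (w x : Fin n → ℝ) (i : Fin n) :
    ((Kry Aᵀ w)ᵀ *ᵥ x) i = w ⬝ᵥ (A ^ (i : ℕ) *ᵥ x) := by
  rw [dotProduct_mulVec, ← mulVec_transpose, transpose_pow]
  rfl

lemma kry_mul {n : ℕ} (A M : Matrix (Fin n) (Fin n) ℝ) (v w : Fin n → ℝ) (i j : Fin n) :
    ((Kry Aᵀ w)ᵀ * M * Kry A v) i j = w ⬝ᵥ ((A ^ (i : ℕ) * M * A ^ (j : ℕ)) *ᵥ v) := by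
  have : ((Kry Aᵀ w)ᵀ * M * Kry A v) i j =
      ((Kry Aᵀ w)ᵀ *ᵥ (M *ᵥ (A ^ (j : ℕ) *ᵥ v))) i := by
    rw [mulVec_mulVec]
    rfl
  rw [this, kry_T, mulVec_mulVec, mulVec_mulVec, mul_assoc]

lemma alg {n : ℕ} {A A' : Matrix (Fin n) (Fin n) ℝ} {v w v' w' : Fin n → ℝ}
    (hv : (Kry A v).det ≠ 0) (hw : (Kry Aᵀ w).det ≠ 0)
    (h : ∀ k : ℕ, w' ⬝ᵥ (A' ^ k *ᵥ v') = w ⬝ᵥ (A ^ k *ᵥ v)) :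
    ∃ g : GL (Fin n) ℝ, A' = g * A * (g⁻¹ : GL (Fin n) ℝ) ∧
      v' = (g : Matrix (Fin n) (Fin n) ℝ) *ᵥ v ∧
      w' = w ᵥ* ((g⁻¹ : GL (Fin n) ℝ) : Matrix (Fin n) (Fin n) ℝ) := by
  have hWW0 : (Kry A'ᵀ w')ᵀ * 1 * Kry A' v' = (Kry Aᵀ w)ᵀ * 1 * Kry A v := by
    ext i j
    rw [kry_mul, kry_mul, mul_one, mul_one, ← pow_add, ← pow_add, h]
  have hWA : (Kry A'ᵀ w')ᵀ * A' * Kry A' v' = (Kry Aᵀ w)ᵀ * A * Kry A v := by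
    ext i j
    rw [kry_mul, kry_mul, ← pow_succ, ← pow_succ, ← pow_add, ← pow_add, h]
  have hWv : (Kry A'ᵀ w')ᵀ *ᵥ v' = (Kry Aᵀ w)ᵀ *ᵥ v := by
    ext i
    rw [kry_T, kry_T, h]
  have hwV : w' ᵥ* Kry A' v' = w ᵥ* Kry A v := by
    ext j
    exact h j
  rw [mul_one, mul_one] at hWW0
  rw [← det_transpose] at hw
  generalize Kry A v = V at *
  generalize Kry A' v' = V' at *
  generalize (Kry Aᵀ w)ᵀ = W at *
  generalize (Kry A'ᵀ w')ᵀ = W' at *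
  have hdet : W'.det * V'.det ≠ 0 := by
    rw [← det_mul, hWW0, det_mul]; exact mul_ne_zero hw hv
  have iV := isUnit_iff_ne_zero.2 hv
  have iV' := isUnit_iff_ne_zero.2 (right_ne_zero_of_mul hdet)
  have iW' := isUnit_iff_ne_zero.2 (left_ne_zero_of_mul hdet)
  let g : GL (Fin n) ℝ := ⟨V' * V⁻¹, V * V'⁻¹, by
    rw [mul_assoc, nonsing_inv_mul_cancel_left _ _ iV, mul_nonsing_inv _ iV'], by
    rw [mul_assoc, nonsing_inv_mul_cancel_left _ _ iV', mul_nonsing_inv _ iV]⟩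
  have hg1 : (g : Matrix (Fin n) (Fin n) ℝ) = V' * V⁻¹ := rfl
  have hg2 : ((g⁻¹ : GL (Fin n) ℝ) : Matrix (Fin n) (Fin n) ℝ) = V * V'⁻¹ := rfl
  have hWg : W' * g = W := by
    rw [hg1, ← mul_assoc, hWW0, mul_nonsing_inv_cancel_right _ _ iV]
  have hVg : ((g⁻¹ : GL (Fin n) ℝ) : Matrix (Fin n) (Fin n) ℝ) * V' = V := by
    rw [hg2, nonsing_inv_mul_cancel_right _ _ iV']
  refine ⟨g, ?_, ?_, ?_⟩
  · have e : W' * (A' * V') = W' * ((g * A * (g⁻¹ : GL (Fin n) ℝ)) * V') := by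
      rw [← mul_assoc, hWA, mul_assoc _ _ V', hVg, ← mul_assoc, ← mul_assoc, hWg]
    have e2 : A' * V' = (g * A * (g⁻¹ : GL (Fin n) ℝ)) * V' := by
      rw [← nonsing_inv_mul_cancel_left _ (A' * V') iW', e, nonsing_inv_mul_cancel_left _ _ iW']
    rw [← mul_nonsing_inv_cancel_right _ A' iV', e2, mul_nonsing_inv_cancel_right _ _ iV']
  · rw [← hWg, ← mulVec_mulVec] at hWv
    have := congrArg (fun x => W'⁻¹ *ᵥ x) hWv
    simpa [mulVec_mulVec, nonsing_inv_mul _ iW', nonsing_inv_mul_cancel_left _ _ iW'] using this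
  · rw [← hVg, ← vecMul_vecMul] at hwV
    have := congrArg (fun x => x ᵥ* V'⁻¹) hwV
    simpa only [vecMul_vecMul, mul_nonsing_inv _ iV', mul_nonsing_inv_cancel_right _ _ iV',
      vecMul_one] using this

lemma poly_lin {V : Type*} [AddCommGroup V] [Module ℝ V] (l : V →ₗ[ℝ] ℝ) :
    IsPolyFun (fun z => l z) := Algebra.subset_adjoin ⟨l, rfl⟩

lemma poly_im {n : ℕ} (i j : Fin n) :
    IsPolyFun (fun z : Matrix (Fin n) (Fin n) ℂ => (z i j).im) :=
  poly_lin (Complex.imLm ∘ₗ (LinearMap.proj j : (Fin n → ℂ) →ₗ[ℝ] ℂ) ∘ₗ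
    (LinearMap.proj i : (Fin n → Fin n → ℂ) →ₗ[ℝ] (Fin n → ℂ)))

lemma poly_re {n : ℕ} (i j : Fin n) :
    IsPolyFun (fun z : Matrix (Fin n) (Fin n) ℂ => (z i j).re) :=
  poly_lin (Complex.reLm ∘ₗ (LinearMap.proj j : (Fin n → ℂ) →ₗ[ℝ] ℂ) ∘ₗ
    (LinearMap.proj i : (Fin n → Fin n → ℂ) →ₗ[ℝ] (Fin n → ℂ)))

lemma IsPolyFun.mul {V : Type*} [AddCommGroup V] [Module ℝ V] {f g : V → ℝ}
    (hf : IsPolyFun f) (hg : IsPolyFun g) : IsPolyFun (fun z => f z * g z) :=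
  Subalgebra.mul_mem _ hf hg

lemma IsPolyFun.sub_const {V : Type*} [AddCommGroup V] [Module ℝ V] {f : V → ℝ}
    (hf : IsPolyFun f) (c : ℝ) : IsPolyFun (fun z => f z - c) :=
  Subalgebra.sub_mem _ hf (Subalgebra.algebraMap_mem _ c)

lemma poly_const {V : Type*} [AddCommGroup V] [Module ℝ V] (c : ℝ) :
    IsPolyFun (fun _ : V => c) := Subalgebra.algebraMap_mem _ c

lemma poly_sum {V ι : Type*} [AddCommGroup V] [Module ℝ V] (s : Finset ι) {f : ι → V → ℝ}
    (hf : ∀ i, IsPolyFun (f i)) : IsPolyFun (fun z => ∑ i ∈ s, f i z) := by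
  have := Subalgebra.sum_mem (Algebra.adjoin ℝ (Set.range fun l : V →ₗ[ℝ] ℝ => ⇑l))
    (t := s) (f := f) (fun i _ => hf i)
  unfold IsPolyFun
  convert this using 1
  ext z
  simp

lemma poly_pow {n : ℕ} (k : ℕ) : ∀ i j : Fin n,
    IsPolyFun (fun z : Matrix (Fin (n+1)) (Fin (n+1)) ℂ => (imA z ^ k) i j) := by
  induction k with
  | zero =>
    intro i j
    simp only [pow_zero]
    exact poly_const _
  | succ k ih =>
    intro i j
    simp only [pow_succ, mul_apply]
    exact poly_sum _ fun l => (ih i l).mul (poly_im _ _)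

lemma poly_inv {n : ℕ} (k : ℕ) : IsPolyFun
    (fun z : Matrix (Fin (n+1)) (Fin (n+1)) ℂ => imw z ⬝ᵥ (imA z ^ k *ᵥ imv z)) := by
  simp only [dotProduct, mulVec]
  exact poly_sum _ fun i => (poly_im _ _).mul (poly_sum _ fun j => (poly_pow k i j).mul (poly_im _ _))

lemma RSdef_of_KC {n : ℕ} {A : Matrix (Fin n) (Fin n) ℝ} {v w : Fin n → ℝ} {d : ℝ}
    (hv : KC A v) (hw : KC Aᵀ w) : RSdef (iM (blkB A v w d)) := by
  constructor
  · intro g hg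
    rw [mact_iM, dgR_conj] at hg
    have h1 := congrArg imA hg
    have h2 := congrArg imv hg
    rw [imA_iM, imA_iM] at h1
    rw [imv_iM, imv_iM] at h2
    have h3 : Commute (g : Matrix (Fin n) (Fin n) ℝ) A := by
      have := congrArg (fun x => x * (g : Matrix (Fin n) (Fin n) ℝ)) h1
      simp only [mul_assoc, Units.inv_mul, mul_one] at this
      exact this
    have h4 : (g : Matrix (Fin n) (Fin n) ℝ) * Kry A v = Kry A v := by
      ext i j
      have e : ((g : Matrix (Fin n) (Fin n) ℝ) * Kry A v) i j =
        ((g : Matrix (Fin n) (Fin n) ℝ) *ᵥ (A ^ (j : ℕ) *ᵥ v)) i := rfl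
      rw [e, mulVec_mulVec, (h3.pow_right _).eq, ← mulVec_mulVec, h2]
      rfl
    have iV := isUnit_iff_ne_zero.2 hv.det_ne
    apply Units.ext
    rw [← mul_nonsing_inv_cancel_right _ (g : Matrix (Fin n) (Fin n) ℝ) iV, h4,
      mul_nonsing_inv _ iV]
    rfl
  · refine ⟨{f | (∃ i j, f = fun z => (z i j).re) ∨
      (∃ k : ℕ, f = fun z => imw z ⬝ᵥ (imA z ^ k *ᵥ imv z) - w ⬝ᵥ (A ^ k *ᵥ v)) ∨
      f = fun z => imd z - d}, ?_, ?_⟩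
    · rintro f (⟨i, j, rfl⟩ | ⟨k, rfl⟩ | rfl)
      · exact poly_re i j
      · exact (poly_inv k).sub_const _
      · exact (poly_im _ _).sub_const _
    · ext z
      constructor
      · rintro ⟨g, rfl⟩ f (⟨i, j, rfl⟩ | ⟨k, rfl⟩ | rfl)
        · rw [mact_iM]; simp [iM]
        · simp only [mact_iM, dgR_conj, imA_iM, imv_iM, imw_iM]
          rw [Units.conj_pow, ← dotProduct_mulVec, mulVec_mulVec, mulVec_mulVec]
          simp [← mul_assoc]
        · simp only [mact_iM, dgR_conj, imd_iM, sub_self]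
      · intro hz
        have hre : ∀ i j, (z i j).re = 0 := fun i j => hz _ (Or.inl ⟨i, j, rfl⟩)
        have hk : ∀ k : ℕ, imw z ⬝ᵥ (imA z ^ k *ᵥ imv z) = w ⬝ᵥ (A ^ k *ᵥ v) :=
          fun k => sub_eq_zero.1 (hz _ (Or.inr (Or.inl ⟨k, rfl⟩)))
        have hd : imd z = d := sub_eq_zero.1 (hz _ (Or.inr (Or.inr rfl)))
        obtain ⟨g, g1, g2, g3⟩ := alg hv.det_ne hw.det_ne hk
        refine ⟨g, ?_⟩
        rw [mact_iM, dgR_conj, ← g1, ← g2, ← g3, ← hd]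
        exact eq_iM z hre

/-- an element of `s_{n+1}` is regular semi-simple (trivial stabilizer and
Zariski-closed orbit) iff `ℂ[y₀]·v = ℂⁿ` and `w·ℂ[y₀] = ℂ_n`. -/
theorem stmt0 (n : ℕ) (y : Matrix (Fin (n+1)) (Fin (n+1)) ℂ) (hy : y ∈ sSet n) :
    RSdef y ↔ RSspan y := by
  have hre : ∀ i j, (y i j).re = 0 := by
    intro i j
    have := congrArg Complex.re (congrFun (congrFun hy i) j)
    simp at this
    exact this
  rw [eq_iM y hre, RSspan_iff]
  exact ⟨KC_of_RSdef, fun h => RSdef_of_KC h.1 h.2⟩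

end
end

section
/- A regular semi-simple element y ∈ s_{n+1} matches to signature (n,0) (i.e. Inv(y) = Inv(x) for some regular semi-simple x in the Lie algebra u(n+1) of the compact unitary group) if and only if y is GL_n(ℝ)-conjugate to an element of the form i·M where M is real symmetric with diagonal (λ₁,...,λₙ,d), off-diagonal entries only in the last row and column given by μ₁,...,μₙ. -/
open Matrix MeasureTheory

noncomputable section

/-- assemble blocks -/
def mkB {n : ℕ} (A : Matrix (Fin n) (Fin n) ℂ) (v w : Fin n → ℂ) (d : ℂ) :
    Matrix (Fin (n+1)) (Fin (n+1)) ℂ :=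
  Matrix.reindex finSumFinEquiv finSumFinEquiv
    (Matrix.fromBlocks A (Matrix.of fun i (_ : Fin 1) => v i)
      (Matrix.of fun (_ : Fin 1) j => w j) (Matrix.of fun _ _ => d))

lemma fs_cast {n : ℕ} (i : Fin n) :
    (finSumFinEquiv (m := n) (n := 1)).symm i.castSucc = Sum.inl i := by
  rw [Equiv.symm_apply_eq]; rfl

lemma fs_last {n : ℕ} :
    (finSumFinEquiv (m := n) (n := 1)).symm (Fin.last n) = Sum.inr 0 := by
  rw [Equiv.symm_apply_eq]; rfl

lemma blk0_mkB {n : ℕ} (A : Matrix (Fin n) (Fin n) ℂ) (v w : Fin n → ℂ) (d : ℂ) :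
    blk0 (mkB A v w d) = A := by
  ext i j; simp [blk0, mkB, fs_cast]

lemma blkv_mkB {n : ℕ} (A : Matrix (Fin n) (Fin n) ℂ) (v w : Fin n → ℂ) (d : ℂ) :
    blkv (mkB A v w d) = v := by
  ext i; simp [blkv, mkB, fs_cast, fs_last]

lemma blkw_mkB {n : ℕ} (A : Matrix (Fin n) (Fin n) ℂ) (v w : Fin n → ℂ) (d : ℂ) :
    blkw (mkB A v w d) = w := by
  ext i; simp [blkw, mkB, fs_cast, fs_last]

lemma blkd_mkB {n : ℕ} (A : Matrix (Fin n) (Fin n) ℂ) (v w : Fin n → ℂ) (d : ℂ) :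
    blkd (mkB A v w d) = d := by
  simp [blkd, mkB, fs_last]

lemma mkB_blk {n : ℕ} (y : Matrix (Fin (n+1)) (Fin (n+1)) ℂ) :
    mkB (blk0 y) (blkv y) (blkw y) (blkd y) = y := by
  ext i j
  refine Fin.lastCases ?_ (fun i => ?_) i <;> refine Fin.lastCases ?_ (fun j => ?_) j <;>
    simp [blk0, blkv, blkw, blkd, mkB, fs_cast, fs_last]

lemma mact_mkB {n : ℕ} (g : GL (Fin n) ℝ) (A : Matrix (Fin n) (Fin n) ℂ)
    (v w : Fin n → ℂ) (d : ℂ) :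
    mact g (mkB A v w d) =
      mkB ((g : Matrix (Fin n) (Fin n) ℝ).map (fun r : ℝ => (r : ℂ)) * A *
        (((g⁻¹ : GL (Fin n) ℝ) : Matrix (Fin n) (Fin n) ℝ)).map (fun r : ℝ => (r : ℂ)))
        ((g : Matrix (Fin n) (Fin n) ℝ).map (fun r : ℝ => (r : ℂ)) *ᵥ v)
        (w ᵥ* (((g⁻¹ : GL (Fin n) ℝ) : Matrix (Fin n) (Fin n) ℝ)).map (fun r : ℝ => (r : ℂ))) d := by
  unfold mact dgC mkB
  simp only [Matrix.reindex_apply]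
  rw [Matrix.submatrix_mul_equiv, Matrix.submatrix_mul_equiv]
  congr 1
  rw [Matrix.fromBlocks_multiply, Matrix.fromBlocks_multiply]
  congr 1 <;> ext i j <;> simp [Matrix.mul_apply, Matrix.mulVec, Matrix.vecMul, dotProduct]

lemma iArrow_eq {n : ℕ} (lam mu : Fin n → ℝ) (d : ℝ) :
    iArrow lam mu d = mkB (Matrix.diagonal fun i => Complex.I * (lam i : ℂ))
      (fun i => Complex.I * mu i) (fun i => Complex.I * mu i) (Complex.I * d) := by
  ext i j
  refine Fin.lastCases ?_ (fun i => ?_) i <;> refine Fin.lastCases ?_ (fun j => ?_) j <;>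
    simp [iArrow, iM, arrow, mkB, fs_cast, fs_last]
  by_cases h : i = j
  · subst h; simp
  · simp [h]

section cyc
variable {K : Type*} [Field K] {n : ℕ}

/-- cyclic map -/
def cyc (A : Matrix (Fin n) (Fin n) K) (b : Fin n → K) : Polynomial K →ₗ[K] (Fin n → K) where
  toFun p := Polynomial.aeval A p *ᵥ b
  map_add' p q := by simp [Matrix.add_mulVec]
  map_smul' r p := by simp [Matrix.smul_mulVec]

lemma cyc_apply (A : Matrix (Fin n) (Fin n) K) (b : Fin n → K) (p : Polynomial K) :
    cyc A b p = Polynomial.aeval A p *ᵥ b := rfl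

lemma cyc_X (A : Matrix (Fin n) (Fin n) K) (b : Fin n → K) (p : Polynomial K) :
    cyc A b (Polynomial.X * p) = A *ᵥ cyc A b p := by
  simp [cyc_apply]

lemma cyc_Xpow (A : Matrix (Fin n) (Fin n) K) (b : Fin n → K) (k : ℕ) (p : Polynomial K) :
    cyc A b (Polynomial.X ^ k * p) = A ^ k *ᵥ cyc A b p := by
  simp [cyc_apply]

lemma cyc_surj (A : Matrix (Fin n) (Fin n) K) (b : Fin n → K)
    (h : Submodule.span K {u : Fin n → K | ∃ k : ℕ, u = (A ^ k) *ᵥ b} = ⊤) :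
    Function.Surjective (cyc A b) := by
  rw [← LinearMap.range_eq_top, eq_top_iff, ← h, Submodule.span_le]
  rintro _ ⟨k, rfl⟩
  exact ⟨Polynomial.X ^ k, by simp [cyc_apply]⟩

lemma moments (A A' : Matrix (Fin n) (Fin n) K) (b c b' c' : Fin n → K)
    (hch : A.charpoly = A'.charpoly)
    (hm : ∀ k : Fin n, c ⬝ᵥ (A ^ (k:ℕ) *ᵥ b) = c' ⬝ᵥ (A' ^ (k:ℕ) *ᵥ b')) (p : Polynomial K) :
    c ⬝ᵥ cyc A b p = c' ⬝ᵥ cyc A' b' p := by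
  have key : ∀ (B : Matrix (Fin n) (Fin n) K) (e : Fin n → K),
      B.charpoly = A.charpoly → cyc B e p = cyc B e (p %ₘ A.charpoly) := by
    intro B e hB
    have := Polynomial.modByMonic_add_div p A.charpoly
    conv_lhs => rw [← this]
    rw [map_add, cyc_apply B e (_ * _), map_mul, ← hB, Matrix.aeval_self_charpoly]
    simp
  rw [key A b rfl, key A' b' hch.symm]
  set q := p %ₘ A.charpoly
  have hq : q.degree < n := by
    have := Polynomial.degree_modByMonic_lt p (Matrix.charpoly_monic A)
    rwa [Matrix.charpoly_degree_eq_dim, Fintype.card_fin] at this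
  simp only [cyc_apply]
  by_cases hn : n = 0
  · subst hn; simp [dotProduct]
  have hq' : q.natDegree < n := by
    rcases eq_or_ne q 0 with h | h
    · rw [h]; simp; omega
    · exact (Polynomial.natDegree_lt_iff_degree_lt h).2 hq
  rw [Polynomial.aeval_eq_sum_range' hq', Polynomial.aeval_eq_sum_range' hq',
    Matrix.sum_mulVec, Matrix.sum_mulVec, dotProduct_sum, dotProduct_sum]
  refine Finset.sum_congr rfl fun k hk => ?_
  have := hm ⟨k, Finset.mem_range.1 hk⟩
  simp only at this
  rw [Matrix.smul_mulVec, Matrix.smul_mulVec, dotProduct_smul, dotProduct_smul, this]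

lemma conj_exists (A A' : Matrix (Fin n) (Fin n) K) (b c b' c' : Fin n → K)
    (hch : A.charpoly = A'.charpoly)
    (hm : ∀ k : Fin n, c ⬝ᵥ (A ^ (k:ℕ) *ᵥ b) = c' ⬝ᵥ (A' ^ (k:ℕ) *ᵥ b'))
    (hb : Submodule.span K {u : Fin n → K | ∃ k : ℕ, u = (A ^ k) *ᵥ b} = ⊤)
    (hc : Submodule.span K {u : Fin n → K | ∃ k : ℕ, u = c ᵥ* (A ^ k)} = ⊤) :
    ∃ g h : Matrix (Fin n) (Fin n) K, h * g = 1 ∧ g * h = 1 ∧ g * A = A' * g ∧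
      g *ᵥ b = b' ∧ c' ᵥ* g = c := by
  have hM := moments A A' b c b' c' hch hm
  have hker : LinearMap.ker (cyc A' b') ≤ LinearMap.ker (cyc A b) := by
    intro p hp
    rw [LinearMap.mem_ker] at hp ⊢
    have h1 : ∀ u : Fin n → K, u ⬝ᵥ cyc A b p = 0 := by
      intro u
      have hu : u ∈ Submodule.span K {u : Fin n → K | ∃ k : ℕ, u = c ᵥ* (A ^ k)} := by
        rw [hc]; trivial
      induction hu using Submodule.span_induction with
      | mem x hx =>
        obtain ⟨k, rfl⟩ := hx
        rw [← Matrix.dotProduct_mulVec, ← cyc_Xpow, hM, cyc_Xpow, hp]; simp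
      | zero => simp
      | add x y _ _ hx hy => rw [add_dotProduct, hx, hy, add_zero]
      | smul a x _ hx => rw [smul_dotProduct, hx, smul_zero]
    exact dotProduct_eq_zero _ (fun w => by rw [dotProduct_comm]; exact h1 w)
  have hs := cyc_surj A b hb
  obtain ⟨H, hH⟩ : ∃ H : (Fin n → K) →ₗ[K] (Fin n → K), H ∘ₗ cyc A' b' = cyc A b := by
    obtain ⟨s, hs'⟩ := (cyc A' b').rangeRestrict.exists_rightInverse_of_surjective
      (LinearMap.range_rangeRestrict _)
    obtain ⟨H, hH⟩ := LinearMap.exists_extend (cyc A b ∘ₗ s)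
    refine ⟨H, LinearMap.ext fun p => ?_⟩
    have h1 := LinearMap.congr_fun hH ((cyc A' b').rangeRestrict p)
    have h2 := LinearMap.congr_fun hs' ((cyc A' b').rangeRestrict p)
    have h3 : cyc A' b' (s ((cyc A' b').rangeRestrict p)) = cyc A' b' p :=
      congrArg Subtype.val h2
    have h4 : s ((cyc A' b').rangeRestrict p) - p ∈ LinearMap.ker (cyc A b) := by
      apply hker
      rw [LinearMap.mem_ker, map_sub, h3, sub_self]
    rw [LinearMap.mem_ker, map_sub, sub_eq_zero] at h4
    rw [← h4]
    exact h1
  have hH' : ∀ p, H (cyc A' b' p) = cyc A b p := fun p => by rw [← hH]; rfl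
  have Hs : Function.Surjective H := by
    intro u; obtain ⟨p, rfl⟩ := hs u; exact ⟨_, hH' p⟩
  have Hi : Function.Injective H := LinearMap.injective_iff_surjective.2 Hs
  let E := LinearEquiv.ofBijective H ⟨Hi, Hs⟩
  have hE : ∀ p, E.symm (cyc A b p) = cyc A' b' p := fun p => by
    rw [LinearEquiv.symm_apply_eq]; exact (hH' p).symm
  have hg : ∀ p, LinearMap.toMatrix' E.symm.toLinearMap *ᵥ (cyc A b p) = cyc A' b' p := fun p => by
    rw [LinearMap.toMatrix'_mulVec]; exact hE p
  refine ⟨LinearMap.toMatrix' E.symm.toLinearMap, LinearMap.toMatrix' E.toLinearMap,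
    ?_, ?_, ?_, ?_, ?_⟩
  · rw [← LinearMap.toMatrix'_comp]; simp
  · rw [← LinearMap.toMatrix'_comp]; simp
  · refine Matrix.ext_of_mulVec_single fun i => ?_
    obtain ⟨p, hp⟩ := hs (Pi.single i 1)
    rw [← hp, ← Matrix.mulVec_mulVec, ← Matrix.mulVec_mulVec, ← cyc_X, hg, hg, cyc_X]
  · have := hg 1
    simpa [cyc_apply] using this
  · refine dotProduct_eq _ _ fun u => ?_
    obtain ⟨p, rfl⟩ := hs u
    rw [← Matrix.dotProduct_mulVec, hg, hM]

end cyc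

/-- complexification of a real matrix -/
lemma map_ofReal_mul {n : ℕ} (A B : Matrix (Fin n) (Fin n) ℝ) :
    (A * B).map (fun r : ℝ => (r : ℂ)) =
      A.map (fun r : ℝ => (r : ℂ)) * B.map (fun r : ℝ => (r : ℂ)) :=
  Matrix.map_mul (f := Complex.ofRealHom)

lemma map_ofReal_one {n : ℕ} :
    (1 : Matrix (Fin n) (Fin n) ℝ).map (fun r : ℝ => (r : ℂ)) = 1 :=
  Matrix.map_one _ Complex.ofReal_zero Complex.ofReal_one

lemma intertwine {n : ℕ} {g A B : Matrix (Fin n) (Fin n) ℂ} (h : g * A = B * g) (k : ℕ) :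
    g * A ^ k = B ^ k * g := by
  induction k with
  | zero => simp
  | succ k ih => rw [pow_succ, ← mul_assoc, ih, mul_assoc, h, ← mul_assoc, ← pow_succ]

lemma diag_unitary {n : ℕ} (X : Matrix (Fin n) (Fin n) ℂ) (hX : Xᴴ = -X) :
    ∃ (U : Matrix (Fin n) (Fin n) ℂ) (lam : Fin n → ℝ), Uᴴ * U = 1 ∧ U * Uᴴ = 1 ∧
      Uᴴ * X = Matrix.diagonal (fun i => Complex.I * (lam i : ℂ)) * Uᴴ := by
  have hH : (-Complex.I • X).IsHermitian := by
    rw [Matrix.IsHermitian, Matrix.conjTranspose_smul, hX]; simp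
  have h1 : (hH.eigenvectorUnitary : Matrix (Fin n) (Fin n) ℂ)ᴴ * hH.eigenvectorUnitary = 1 :=
    Unitary.coe_star_mul_self hH.eigenvectorUnitary
  have h2 : (hH.eigenvectorUnitary : Matrix (Fin n) (Fin n) ℂ) *
      (hH.eigenvectorUnitary : Matrix (Fin n) (Fin n) ℂ)ᴴ = 1 :=
    Unitary.coe_mul_star_self hH.eigenvectorUnitary
  have h3 := hH.spectral_theorem
  rw [Unitary.conjStarAlgAut_apply] at h3
  refine ⟨hH.eigenvectorUnitary, hH.eigenvalues, h1, h2, ?_⟩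
  have h4 : X = Complex.I • (-Complex.I • X) := by
    rw [smul_smul]; simp
  have h5 : (Matrix.diagonal fun i => Complex.I * (hH.eigenvalues i : ℂ)) =
      Complex.I • (Matrix.diagonal (RCLike.ofReal ∘ hH.eigenvalues) : Matrix (Fin n) (Fin n) ℂ) := by
    rw [← Matrix.diagonal_smul]; rfl
  rw [h5]
  have h6 := h4.trans (congrArg (fun M => Complex.I • M) h3)
  refine (congrArg (fun M => (hH.eigenvectorUnitary : Matrix (Fin n) (Fin n) ℂ)ᴴ * M) h6).trans ?_
  rw [Matrix.mul_smul, ← mul_assoc, ← mul_assoc, h1, one_mul, Matrix.smul_mul]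
  rfl

lemma real_of_unique {n : ℕ} {g A B : Matrix (Fin n) (Fin n) ℂ} {v v' : Fin n → ℂ}
    (hA : A.map (starRingEnd ℂ) = -A) (hB : B.map (starRingEnd ℂ) = -B)
    (hv : ∀ i, (starRingEnd ℂ) (v i) = -v i) (hv' : ∀ i, (starRingEnd ℂ) (v' i) = -v' i)
    (hg : g * A = B * g) (hgv : g *ᵥ v = v')
    (hb : Submodule.span ℂ {u : Fin n → ℂ | ∃ k : ℕ, u = (A ^ k) *ᵥ v} = ⊤) :
    g.map (starRingEnd ℂ) = g := by
  set g' := g.map (starRingEnd ℂ) with hg'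
  have h1 : g' * A = B * g' := by
    have := congrArg (fun M => M.map (starRingEnd ℂ)) hg
    simp only [Matrix.map_mul, hA, hB] at this
    simpa using this
  have h2 : g' *ᵥ v = v' := by
    have : ∀ i, (g' *ᵥ v) i = v' i := by
      intro i
      have h := congrArg (starRingEnd ℂ) (congrFun hgv i)
      rw [RingHom.map_mulVec, hv'] at h
      have e : (starRingEnd ℂ) ∘ v = -v := funext hv
      rw [e, Matrix.mulVec_neg, Pi.neg_apply, neg_inj] at h
      exact h
    exact funext this
  have h3 : ∀ u : Fin n → ℂ, g' *ᵥ u = g *ᵥ u := by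
    intro u
    have hu : u ∈ Submodule.span ℂ {u : Fin n → ℂ | ∃ k : ℕ, u = (A ^ k) *ᵥ v} := by
      rw [hb]; trivial
    induction hu using Submodule.span_induction with
    | mem x hx =>
      obtain ⟨k, rfl⟩ := hx
      rw [Matrix.mulVec_mulVec, Matrix.mulVec_mulVec, intertwine h1, intertwine hg,
        ← Matrix.mulVec_mulVec, ← Matrix.mulVec_mulVec, h2, hgv]
    | zero => simp
    | add x y _ _ hx hy => rw [Matrix.mulVec_add, Matrix.mulVec_add, hx, hy]
    | smul a x _ hx => rw [Matrix.mulVec_smul, Matrix.mulVec_smul, hx]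
  exact Matrix.ext_of_mulVec_single fun i => h3 _

lemma real_form {n : ℕ} {g : Matrix (Fin n) (Fin n) ℂ} (h : g.map (starRingEnd ℂ) = g) :
    (g.map Complex.re).map (fun r : ℝ => (r : ℂ)) = g := by
  ext i j
  exact Complex.conj_eq_iff_re.1 (congrFun (congrFun h i) j)

lemma charpoly_of_intertwine {n : ℕ} {g h A B : Matrix (Fin n) (Fin n) ℂ}
    (hg : h * g = 1) (e : g * A = B * g) : A.charpoly = B.charpoly := by
  have : A = h * (B * g) := by rw [← e, ← mul_assoc, hg, one_mul]
  rw [this, Matrix.charpoly_mul_comm, mul_assoc, mul_eq_one_comm.1 hg, mul_one]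

lemma forward {n : ℕ} (y : Matrix (Fin (n+1)) (Fin (n+1)) ℂ)
    (hy : y ∈ sSet n) (hrs : RSspan y) (hm : MatchesN0 y) :
      ∃ (g : GL (Fin n) ℝ) (lam mu : Fin n → ℝ) (d : ℝ),
        mact g y = iArrow lam mu d := by
  obtain ⟨x, hx, -, hI⟩ := hm
  have hx' : ∀ i j, (starRingEnd ℂ) (x j i) = - x i j := fun i j =>
    congrFun (congrFun (show xᴴ = -x from hx) i) j
  have hy' : ∀ i j, (starRingEnd ℂ) (y i j) = - y i j := fun i j => by
    have := congrFun (congrFun (show y + y.map (starRingEnd ℂ) = 0 from hy) i) j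
    exact eq_neg_of_add_eq_zero_right this
  simp only [InvS, InvU, Prod.mk.injEq] at hI
  obtain ⟨hI1, hI2, hI3⟩ := hI
  have hX : (blk0 x)ᴴ = -blk0 x := by
    ext i j; exact hx' _ _
  obtain ⟨U, lam, hU1, hU2, hU3⟩ := diag_unitary (blk0 x) hX
  set D : Matrix (Fin n) (Fin n) ℂ := Matrix.diagonal (fun i => Complex.I * (lam i : ℂ)) with hD
  set u := Uᴴ *ᵥ blkv x with hu
  set mu : Fin n → ℝ := fun i => ‖u i‖ with hmu
  set m : Fin n → ℂ := fun i => Complex.I * mu i with hmm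
  have hch : (blk0 y).charpoly = D.charpoly := by
    rw [hI1]; exact charpoly_of_intertwine hU2 hU3
  have hmom : ∀ k : Fin n, blkw y ⬝ᵥ (blk0 y ^ (k:ℕ) *ᵥ blkv y) = m ⬝ᵥ (D ^ (k:ℕ) *ᵥ m) := by
    intro k
    rw [congrFun hI2 k]
    have e1 : star (blkv x) = star u ᵥ* Uᴴ := by
      rw [hu, Matrix.star_mulVec, Matrix.vecMul_vecMul, Matrix.conjTranspose_conjTranspose, hU2,
        Matrix.vecMul_one]
    rw [e1, ← Matrix.dotProduct_mulVec, Matrix.mulVec_mulVec, intertwine hU3,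
      ← Matrix.mulVec_mulVec, ← hu, hD, Matrix.diagonal_pow]
    simp only [dotProduct, Matrix.mulVec_diagonal]
    rw [← Finset.sum_neg_distrib]
    refine Finset.sum_congr rfl fun i _ => ?_
    have e2 : star (u i) * u i = (mu i : ℂ) * mu i := by
      have := Complex.conj_mul' (u i)
      rw [← sq]; exact this
    have e3 : m i * m i = - ((mu i : ℂ) * mu i) := by
      simp only [hmm]; linear_combination (mu i : ℂ) * mu i * Complex.I_mul_I
    simp only [Pi.star_apply]
    linear_combination (-(((fun i => Complex.I * (lam i : ℂ)) ^ (k:ℕ)) i)) * e2 -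
      (((fun i => Complex.I * (lam i : ℂ)) ^ (k:ℕ)) i) * e3
  obtain ⟨g, h, hhg, hgh, hgA, hgv, hgw⟩ :=
    conj_exists (blk0 y) D (blkv y) (blkw y) m m hch hmom hrs.1 hrs.2
  have hyA : (blk0 y).map (starRingEnd ℂ) = -blk0 y := by ext i j; exact hy' _ _
  have hDr : D.map (starRingEnd ℂ) = -D := by
    ext i j
    by_cases hij : i = j
    · subst hij; simp [hD]
    · simp [hD, hij]
  have hgr : g.map (starRingEnd ℂ) = g :=
    real_of_unique hyA hDr (fun i => hy' _ _) (fun i => by simp [hmm]) hgA hgv hrs.1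
  have hhr : h.map (starRingEnd ℂ) = h := by
    have e : h.map (starRingEnd ℂ) * g = 1 := by
      have := congrArg (fun M => M.map (starRingEnd ℂ)) hhg
      simp only [Matrix.map_mul, hgr] at this
      rw [this]; simp
    calc h.map (starRingEnd ℂ) = h.map (starRingEnd ℂ) * (g * h) := by rw [hgh, mul_one]
      _ = h := by rw [← mul_assoc, e, one_mul]
  have inj : Function.Injective (fun M : Matrix (Fin n) (Fin n) ℝ => M.map (fun r : ℝ => (r : ℂ))) :=
    Matrix.map_injective Complex.ofReal_injective
  let G : GL (Fin n) ℝ := ⟨g.map Complex.re, h.map Complex.re,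
    inj (by simp only [map_ofReal_mul, real_form hgr, real_form hhr, hgh, map_ofReal_one]),
    inj (by simp only [map_ofReal_mul, real_form hgr, real_form hhr, hhg, map_ofReal_one])⟩
  refine ⟨G, lam, mu, (blkd y).im, ?_⟩
  have hG : (G : Matrix (Fin n) (Fin n) ℝ).map (fun r : ℝ => (r : ℂ)) = g := real_form hgr
  have hG' : ((G⁻¹ : GL (Fin n) ℝ) : Matrix (Fin n) (Fin n) ℝ).map (fun r : ℝ => (r : ℂ)) = h :=
    real_form hhr
  rw [← mkB_blk y, mact_mkB, iArrow_eq, hG, hG', hgA, mul_assoc, hgh, mul_one, hgv, ← hgw,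
    Matrix.vecMul_vecMul, hgh, Matrix.vecMul_one, blkd_mkB]
  congr 1
  have h0 := congrArg Complex.re (hy' (Fin.last n) (Fin.last n))
  simp only [Complex.conj_re, Complex.neg_re] at h0
  apply Complex.ext
  · simp only [blkd]; simp; linarith
  · simp [blkd]

lemma backward {n : ℕ} (y : Matrix (Fin (n+1)) (Fin (n+1)) ℂ) (hrs : RSspan y)
    (G : GL (Fin n) ℝ) (lam mu : Fin n → ℝ) (d : ℝ) (hG : mact G y = iArrow lam mu d) :
    MatchesN0 y := by
  rw [← mkB_blk y, mact_mkB, iArrow_eq] at hG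
  set g := (G : Matrix (Fin n) (Fin n) ℝ).map (fun r : ℝ => (r : ℂ)) with hg
  set h := ((G⁻¹ : GL (Fin n) ℝ) : Matrix (Fin n) (Fin n) ℝ).map (fun r : ℝ => (r : ℂ)) with hh
  have hgh : g * h = 1 := by
    rw [hg, hh, ← map_ofReal_mul, ← Units.val_mul, mul_inv_cancel, Units.val_one, map_ofReal_one]
  have hhg : h * g = 1 := by
    rw [hg, hh, ← map_ofReal_mul, ← Units.val_mul, inv_mul_cancel, Units.val_one, map_ofReal_one]
  have k0 := congrArg blk0 hG
  have k1 := congrArg blkv hG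
  have k2 := congrArg blkw hG
  have k3 := congrArg blkd hG
  simp only [blk0_mkB, blkv_mkB, blkw_mkB, blkd_mkB] at k0 k1 k2 k3
  set D : Matrix (Fin n) (Fin n) ℂ := Matrix.diagonal (fun i => Complex.I * (lam i : ℂ)) with hD
  set m : Fin n → ℂ := fun i => Complex.I * mu i with hmm
  have e : g * blk0 y = D * g := by rw [← k0, mul_assoc, hhg, mul_one]
  have hw : blkw y = m ᵥ* g := by
    rw [← k2, Matrix.vecMul_vecMul, hhg, Matrix.vecMul_one]
  have hsm : star m = -m := by ext i; simp [hmm]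
  refine ⟨mkB D m m (Complex.I * d), ?_, ?_, ?_⟩
  · show (mkB D m m (Complex.I * d))ᴴ = _
    ext i j
    refine Fin.lastCases ?_ (fun i => ?_) i <;> refine Fin.lastCases ?_ (fun j => ?_) j <;>
      simp [mkB, fs_cast, fs_last, hmm]
    by_cases hij : i = j
    · subst hij; simp [hD]
    · simp [hD, hij, Ne.symm hij]
  · unfold RSspanU
    rw [blk0_mkB, blkv_mkB, eq_top_iff]
    rintro z -
    have hz : h *ᵥ z ∈ Submodule.span ℂ {u : Fin n → ℂ | ∃ k : ℕ, u = (blk0 y ^ k) *ᵥ blkv y} := by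
      rw [hrs.1]; trivial
    have hz2 := Submodule.mem_map_of_mem (f := Matrix.mulVecLin g) hz
    rw [Matrix.mulVecLin_apply, Matrix.mulVec_mulVec, hgh, Matrix.one_mulVec,
      Submodule.map_span] at hz2
    refine Submodule.span_mono ?_ hz2
    rintro _ ⟨_, ⟨k, rfl⟩, rfl⟩
    refine ⟨k, ?_⟩
    rw [Matrix.mulVecLin_apply, Matrix.mulVec_mulVec, intertwine e, ← Matrix.mulVec_mulVec, k1]
  · simp only [InvS, InvU, blk0_mkB, blkv_mkB, blkd_mkB, Prod.mk.injEq]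
    refine ⟨charpoly_of_intertwine hhg e, ?_, k3⟩
    funext k
    rw [hw, ← Matrix.dotProduct_mulVec, Matrix.mulVec_mulVec, intertwine e,
      ← Matrix.mulVec_mulVec, k1, hsm, neg_dotProduct, neg_neg]

/-- a regular semi-simple `y ∈ s_{n+1}` matches to signature `(n,0)` iff
it is `GL_n(ℝ)`-conjugate to an element `i·M` with `M` real symmetric arrow-shaped. -/
theorem stmt3 (n : ℕ) (y : Matrix (Fin (n+1)) (Fin (n+1)) ℂ)
    (hy : y ∈ sSet n) (hrs : RSspan y) :
    MatchesN0 y ↔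
      ∃ (g : GL (Fin n) ℝ) (lam mu : Fin n → ℝ) (d : ℝ),
        mact g y = iArrow lam mu d := by
  constructor
  · exact forward y hy hrs
  · rintro ⟨g, lam, mu, d, h⟩
    exact backward y hrs g lam mu d h

end
end

section
/- The set 𝔖 of regular semi-simple elements of s_{n+1} that match to signature (n,0) has exactly two connected components, and these are interchanged by the conjugation action of any g ∈ GL_n(ℝ) with det(g) < 0. -/
open Matrix MeasureTheory

noncomputable section

/-! ### Connectedness of `GL_n(ℝ)⁺` -/

/-- A transvection as a unit. -/
def tvU {n : ℕ} (i j : Fin n) (h : i ≠ j) (c : ℝ) : GL (Fin n) ℝ where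
  val := transvection i j c
  inv := transvection i j (-c)
  val_inv := by rw [transvection_mul_transvection_same _ _ h]; simp
  inv_val := by rw [transvection_mul_transvection_same _ _ h]; simp

/-- An invertible diagonal matrix as a unit. -/
def dgU {n : ℕ} (a : Fin n → ℝ) (h : ∀ i, a i ≠ 0) : GL (Fin n) ℝ where
  val := diagonal a
  inv := diagonal (fun i => (a i)⁻¹)
  val_inv := by
    rw [diagonal_mul_diagonal, ← diagonal_one]; congr 1; ext i; simp [h i]
  inv_val := by
    rw [diagonal_mul_diagonal, ← diagonal_one]; congr 1; ext i; simp [h i]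

lemma mem_comp_of_path {n : ℕ} (f : ℝ → GL (Fin n) ℝ) (hf : Continuous f) (h0 : f 0 = 1) :
    f 1 ∈ Subgroup.connectedComponentOfOne (GL (Fin n) ℝ) := by
  have h := (isPreconnected_univ.image f hf.continuousOn).subset_connectedComponent
    (x := 1) ⟨0, trivial, h0⟩
  exact h ⟨1, trivial, rfl⟩

lemma tvU_mem {n : ℕ} (i j : Fin n) (h : i ≠ j) (c : ℝ) :
    tvU i j h c ∈ Subgroup.connectedComponentOfOne (GL (Fin n) ℝ) := by
  have := mem_comp_of_path (fun t : ℝ => tvU i j h (t * c)) (by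
    rw [Units.continuous_iff]
    constructor
    · refine continuous_matrix fun k l => ?_
      simp only [Function.comp, tvU, transvection, Matrix.add_apply, single_apply]
      split_ifs <;> fun_prop
    · refine continuous_matrix fun k l => ?_
      simp only [tvU, transvection, Units.inv_mk, Matrix.add_apply, single_apply]
      split_ifs <;> fun_prop) (by
    ext1; simp [tvU])
  simpa using this

lemma dgU_pos_mem {n : ℕ} (a : Fin n → ℝ) (h : ∀ i, 0 < a i) :
    dgU a (fun i => (h i).ne') ∈ Subgroup.connectedComponentOfOne (GL (Fin n) ℝ) := by
  have := mem_comp_of_path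
    (fun t : ℝ => dgU (fun i => Real.exp (t * Real.log (a i))) (fun i => (Real.exp_pos _).ne')) (by
    rw [Units.continuous_iff]
    constructor
    · refine continuous_matrix fun k l => ?_
      simp only [Function.comp, dgU, diagonal_apply]
      split_ifs <;> fun_prop
    · refine continuous_matrix fun k l => ?_
      simp only [dgU, Units.inv_mk, diagonal_apply, ← Real.exp_neg]
      split_ifs <;> fun_prop) (by
    ext1; simp [dgU])
  convert this using 2
  ext1 i
  simp [Real.exp_log (h i)]

/-- diagonal sign matrix, `-1` on `T`. -/
def sgU {n : ℕ} (T : Finset (Fin n)) : GL (Fin n) ℝ :=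
  dgU (fun i => if i ∈ T then -1 else 1) (fun i => by split_ifs <;> norm_num)

lemma sgU_pair {n : ℕ} (i j : Fin n) (h : i ≠ j) :
    sgU {i, j} ∈ Subgroup.connectedComponentOfOne (GL (Fin n) ℝ) := by
  have e : sgU {i, j} = (tvU i j h 1 * tvU j i h.symm (-1) * tvU i j h 1) *
      (tvU i j h 1 * tvU j i h.symm (-1) * tvU i j h 1) := by
    have hw : transvection i j (1:ℝ) * transvection j i (-1) * transvection i j 1 =
      1 + single i j 1 - single j i 1 - single i i 1 - single j j 1 := by
      have : single j i (-1 : ℝ) = - single j i 1 := by ext; simp [single_apply, apply_ite]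
      simp only [transvection, this, mul_add, add_mul, one_mul, mul_one, neg_mul, mul_neg]
      simp [h, h.symm]
      abel
    ext1
    simp only [Units.val_mul, sgU, tvU, dgU, hw]
    have : (diagonal (fun k => if k ∈ ({i, j} : Finset (Fin n)) then (-1:ℝ) else 1)) =
      1 - single i i 2 - single j j 2 := by
      ext k l
      simp only [diagonal_apply, Matrix.sub_apply, one_apply, single_apply,
        Finset.mem_insert, Finset.mem_singleton]
      split_ifs <;> grind
    rw [this]
    simp only [mul_add, add_mul, mul_sub, sub_mul, one_mul, mul_one]
    have h2 : ∀ a : Fin n, single a a (2:ℝ) = single a a 1 + single a a 1 := by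
      intro a; rw [← single_add]; norm_num
    simp [h, h.symm, h2]
    abel
  rw [e]
  have hw := mul_mem (mul_mem (tvU_mem i j h 1) (tvU_mem j i h.symm (-1))) (tvU_mem i j h 1)
  exact mul_mem hw hw

lemma sgU_mul {n : ℕ} (S T : Finset (Fin n)) (h : Disjoint S T) :
    sgU S * sgU T = sgU (S ∪ T) := by
  ext1
  simp only [Units.val_mul, sgU, dgU, diagonal_mul_diagonal]
  congr 1; ext i
  have : i ∈ S → i ∉ T := fun hi => Finset.disjoint_left.1 h hi
  by_cases h1 : i ∈ S <;> by_cases h2 : i ∈ T <;> simp_all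

lemma sgU_sq {n : ℕ} (S : Finset (Fin n)) : sgU S * sgU S = 1 := by
  ext1
  simp only [Units.val_mul, sgU, dgU, diagonal_mul_diagonal, Units.val_one, ← diagonal_one]
  congr 1; ext i
  by_cases h1 : i ∈ S <;> simp_all

lemma conj_mem_comp {n : ℕ} (r g : GL (Fin n) ℝ)
    (hg : g ∈ Subgroup.connectedComponentOfOne (GL (Fin n) ℝ)) :
    r * g * r⁻¹ ∈ Subgroup.connectedComponentOfOne (GL (Fin n) ℝ) := by
  have hc : Continuous (fun g : GL (Fin n) ℝ => r * g * r⁻¹) := by fun_prop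
  have := hc.image_connectedComponent_subset 1 ⟨g, hg, rfl⟩
  have e : r * 1 * r⁻¹ = 1 := by simp
  rw [e] at this
  exact this

lemma index_two {n : ℕ} (o : Fin n) (g : GL (Fin n) ℝ) :
    g ∈ Subgroup.connectedComponentOfOne (GL (Fin n) ℝ) ∨
    sgU {o} * g ∈ Subgroup.connectedComponentOfOne (GL (Fin n) ℝ) := by
  set C := Subgroup.connectedComponentOfOne (GL (Fin n) ℝ) with hC
  set r : GL (Fin n) ℝ := sgU {o} with hr
  have hrr : r * r = 1 := sgU_sq _
  have hri : r⁻¹ = r := inv_eq_of_mul_eq_one_left hrr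
  have hmul : ∀ a b : GL (Fin n) ℝ, (a ∈ C ∨ r * a ∈ C) → (b ∈ C ∨ r * b ∈ C) →
      (a * b ∈ C ∨ r * (a * b) ∈ C) := by
    rintro a b (ha | ha) (hb | hb)
    · exact Or.inl (mul_mem ha hb)
    · right
      have := mul_mem (conj_mem_comp r a ha) hb
      simpa [mul_assoc] using this
    · right; rw [← mul_assoc]; exact mul_mem ha hb
    · left
      have := mul_mem (conj_mem_comp r _ ha) hb
      rw [hri] at this
      have e : r * (r * a) * r * (r * b) = (r * r) * a * (r * r) * b := by group
      rw [e, hrr] at this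
      simpa using this
  have hsg : ∀ T : Finset (Fin n), (sgU T ∈ C ∨ r * sgU T ∈ C) := by
    intro T
    induction T using Finset.induction_on with
    | empty =>
      left
      have : (sgU (∅ : Finset (Fin n))) = 1 := by ext1; simp [sgU, dgU]
      rw [this]; exact one_mem _
    | insert i T hi ih =>
      rw [Finset.insert_eq, ← sgU_mul _ _ (by simpa using hi)]
      refine hmul _ _ ?_ ih
      right
      by_cases hio : o = i
      · subst hio; rw [hrr]; exact one_mem _
      · rw [hr, sgU_mul _ _ (by simpa using hio), ← Finset.insert_eq]
        exact sgU_pair _ _ hio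
  have key := diagonal_transvection_induction_of_det_ne_zero
    (fun M : Matrix (Fin n) (Fin n) ℝ => ∀ g : GL (Fin n) ℝ, g.val = M → (g ∈ C ∨ r * g ∈ C))
    g.val (((Matrix.isUnit_iff_isUnit_det _).1 g.isUnit).ne_zero) ?_ ?_ ?_
  · exact key g rfl
  · intro D hD g hg
    rw [det_diagonal, Finset.prod_ne_zero_iff] at hD
    have hD' : ∀ i, D i ≠ 0 := fun i => hD i (Finset.mem_univ i)
    have e : g = dgU (fun i => |D i|) (fun i => (abs_pos.2 (hD' i)).ne') *
        sgU (Finset.univ.filter fun i => D i < 0) := by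
      ext1
      rw [hg]
      simp only [Units.val_mul, sgU, dgU, diagonal_mul_diagonal]
      congr 1; ext i
      by_cases h : D i < 0
      · simp [h, abs_of_neg h]
      · simp [h, abs_of_nonneg (not_lt.1 h)]
    rw [e]
    exact hmul _ _ (Or.inl (dgU_pos_mem _ fun i => abs_pos.2 (hD' i))) (hsg _)
  · intro t g hg
    left
    have : g = tvU t.i t.j t.hij t.c := by ext1; rw [hg]; rfl
    rw [this]; exact tvU_mem _ _ _ _
  · intro A B hA hB PA PB g hg
    have e : g = GeneralLinearGroup.mkOfDetNeZero A hA * GeneralLinearGroup.mkOfDetNeZero B hB := by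
      ext1; rw [hg]; rfl
    rw [e]
    exact hmul _ _ (PA _ rfl) (PB _ rfl)

lemma det_GL_ne {n : ℕ} (g : GL (Fin n) ℝ) : g.val.det ≠ 0 :=
  ((Matrix.isUnit_iff_isUnit_det _).1 g.isUnit).ne_zero

lemma continuous_det_GL {n : ℕ} : Continuous (fun g : GL (Fin n) ℝ => g.val.det) :=
  Units.continuous_val.matrix_det

lemma det_pos_of_mem {n : ℕ} (g : GL (Fin n) ℝ)
    (hg : g ∈ Subgroup.connectedComponentOfOne (GL (Fin n) ℝ)) : 0 < g.val.det := by
  by_contra h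
  have hp : IsPreconnected (connectedComponent (1 : GL (Fin n) ℝ)) :=
    isPreconnected_connectedComponent
  obtain ⟨x, -, hx⟩ := hp.intermediate_value (a := g) (b := 1) hg mem_connectedComponent
    continuous_det_GL.continuousOn (show (0:ℝ) ∈ _ from ⟨not_lt.1 h, by simp⟩)
  exact det_GL_ne x hx

lemma det_sgU {n : ℕ} (o : Fin n) : (sgU {o} : GL (Fin n) ℝ).val.det = -1 := by
  simp [sgU, dgU, det_diagonal, Finset.prod_ite_eq']

lemma preconn_pos {n : ℕ} (hn : 0 < n) : IsPreconnected {g : GL (Fin n) ℝ | 0 < g.val.det} := by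
  have : {g : GL (Fin n) ℝ | 0 < g.val.det} = connectedComponent 1 := by
    ext g
    refine ⟨fun h => ?_, det_pos_of_mem g⟩
    rcases index_two ⟨0, hn⟩ g with h' | h'
    · exact h'
    · have := det_pos_of_mem _ h'
      rw [Units.val_mul, det_mul, det_sgU] at this
      simp only [Set.mem_ofPred_eq] at h
      linarith
  rw [this]; exact isPreconnected_connectedComponent

lemma preconn_neg {n : ℕ} (hn : 0 < n) : IsPreconnected {g : GL (Fin n) ℝ | g.val.det < 0} := by
  have : {g : GL (Fin n) ℝ | g.val.det < 0} =
      (fun g => sgU {⟨0, hn⟩} * g) '' {g : GL (Fin n) ℝ | 0 < g.val.det} := by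
    ext g
    constructor
    · intro h
      refine ⟨sgU {⟨0, hn⟩} * g, ?_, ?_⟩
      · simp only [Set.mem_ofPred_eq, Units.val_mul, det_mul, det_sgU] at h ⊢; linarith
      · simp only [← mul_assoc, sgU_sq, one_mul]
    · rintro ⟨g, h, rfl⟩
      simp only [Set.mem_ofPred_eq, Units.val_mul, det_mul, det_sgU] at h ⊢; linarith
  rw [this]
  exact (preconn_pos hn).image _ (by fun_prop)
/-! ### Krylov matrices -/

/-- The Krylov matrix with columns `b, A b, …, A^{n-1} b`. -/
def kry {K : Type*} [Field K] {n : ℕ} (A : Matrix (Fin n) (Fin n) K) (b : Fin n → K) :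
    Matrix (Fin n) (Fin n) K :=
  Matrix.of fun i k => ((A ^ (k : ℕ)) *ᵥ b) i

lemma pow_eq_sum {K : Type*} [Field K] {n : ℕ} (hn : 0 < n) (A : Matrix (Fin n) (Fin n) K)
    (k : ℕ) : A ^ k = ∑ j : Fin n,
      ((Polynomial.X ^ k %ₘ A.charpoly : Polynomial K).coeff j) • A ^ (j : ℕ) := by
  have hd : A.charpoly.natDegree = n := by rw [charpoly_natDegree_eq_dim]; simp
  conv_lhs => rw [pow_eq_aeval_mod_charpoly]
  rw [Polynomial.aeval_eq_sum_range' (n := n), ← Fin.sum_univ_eq_sum_range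
    (fun j => ((Polynomial.X ^ k %ₘ A.charpoly : Polynomial K).coeff j) • A ^ j)]
  have := Polynomial.natDegree_modByMonic_lt (Polynomial.X ^ k : Polynomial K)
    (charpoly_monic A) (by intro h; rw [h] at hd; simp at hd; omega)
  rwa [hd] at this

lemma pow_mulVec_eq_sum {K : Type*} [Field K] {n : ℕ} (hn : 0 < n)
    (A : Matrix (Fin n) (Fin n) K) (b : Fin n → K)
    (k : ℕ) : A ^ k *ᵥ b = ∑ j : Fin n,
      ((Polynomial.X ^ k %ₘ A.charpoly : Polynomial K).coeff j) • (A ^ (j : ℕ) *ᵥ b) := by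
  conv_lhs => rw [pow_eq_sum hn A k]
  rw [sum_mulVec]
  simp [smul_mulVec]

lemma span_iff {K : Type*} [Field K] {n : ℕ} (hn : 0 < n) (A : Matrix (Fin n) (Fin n) K)
    (b : Fin n → K) :
    Submodule.span K {u : Fin n → K | ∃ k : ℕ, u = (A ^ k) *ᵥ b} = ⊤ ↔ (kry A b).det ≠ 0 := by
  constructor
  · intro h hdet
    obtain ⟨f, hf0, hf⟩ := exists_vecMul_eq_zero_iff.2 hdet
    have h1 : ∀ j : Fin n, f ⬝ᵥ (A ^ (j : ℕ) *ᵥ b) = 0 := fun j => congrFun hf j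
    have h2 : ∀ k : ℕ, f ⬝ᵥ (A ^ k *ᵥ b) = 0 := by
      intro k
      rw [pow_mulVec_eq_sum hn, dotProduct_sum]
      refine Finset.sum_eq_zero fun j _ => ?_
      rw [dotProduct_smul, h1, smul_zero]
    have h3 : ∀ u : Fin n → K, f ⬝ᵥ u = 0 := by
      intro u
      have hu : u ∈ Submodule.span K {u : Fin n → K | ∃ k : ℕ, u = (A ^ k) *ᵥ b} := by
        rw [h]; trivial
      induction hu using Submodule.span_induction with
      | mem x hx => obtain ⟨k, rfl⟩ := hx; exact h2 k
      | zero => simp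
      | add x y _ _ hx hy => rw [dotProduct_add, hx, hy, add_zero]
      | smul a x _ hx => rw [dotProduct_smul, hx, smul_zero]
    apply hf0
    ext i
    simpa using h3 (Pi.single i 1)
  · intro h
    rw [eq_top_iff]
    intro u _
    have hu : u = kry A b *ᵥ ((kry A b)⁻¹ *ᵥ u) := by
      rw [mulVec_mulVec, mul_nonsing_inv _ (isUnit_iff_ne_zero.2 h), one_mulVec]
    have hs : u = ∑ j : Fin n, ((kry A b)⁻¹ *ᵥ u) j • (A ^ (j : ℕ) *ᵥ b) := by
      conv_lhs => rw [hu]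
      ext i
      simp [mulVec, dotProduct, kry, Finset.sum_apply, mul_comm]
    rw [hs]
    exact Submodule.sum_mem _ fun j _ =>
      Submodule.smul_mem _ _ (Submodule.subset_span ⟨j, rfl⟩)

lemma span_iff' {K : Type*} [Field K] {n : ℕ} (hn : 0 < n) (A : Matrix (Fin n) (Fin n) K)
    (b : Fin n → K) :
    Submodule.span K {u : Fin n → K | ∃ k : ℕ, u = b ᵥ* (A ^ k)} = ⊤ ↔ (kry Aᵀ b).det ≠ 0 := by
  rw [← span_iff hn]
  simp only [← transpose_pow, mulVec_transpose]

lemma kry_smul {K : Type*} [Field K] {n : ℕ} (c : K) (A : Matrix (Fin n) (Fin n) K)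
    (b : Fin n → K) : kry (c • A) (c • b) = kry A b * diagonal (fun k : Fin n => c ^ ((k : ℕ) + 1)) := by
  ext i k
  rw [mul_diagonal]
  simp [kry, smul_pow, smul_mulVec, mulVec_smul]
  ring

lemma det_kry_smul {K : Type*} [Field K] {n : ℕ} (c : K) (hc : c ≠ 0)
    (A : Matrix (Fin n) (Fin n) K)
    (b : Fin n → K) : (kry (c • A) (c • b)).det ≠ 0 ↔ (kry A b).det ≠ 0 := by
  rw [kry_smul, det_mul, det_diagonal]
  have : ∏ k : Fin n, c ^ ((k : ℕ) + 1) ≠ 0 :=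
    Finset.prod_ne_zero_iff.2 fun _ _ => pow_ne_zero _ hc
  simp [this]

lemma conj_pow_mat {K : Type*} [Field K] {n : ℕ} (P A Q : Matrix (Fin n) (Fin n) K)
    (h : Q * P = 1) (k : ℕ) : (P * A * Q) ^ k = P * A ^ k * Q := by
  have h' : P * Q = 1 := mul_eq_one_comm.1 h
  induction k with
  | zero => simp [h']
  | succ k ih =>
    rw [pow_succ, ih, pow_succ]
    calc P * A ^ k * Q * (P * A * Q) = P * A ^ k * (Q * P) * A * Q := by noncomm_ring
      _ = _ := by rw [h]; noncomm_ring

lemma kry_conj {K : Type*} [Field K] {n : ℕ} (P A Q : Matrix (Fin n) (Fin n) K)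
    (b : Fin n → K) (h : Q * P = 1) : kry (P * A * Q) (P *ᵥ b) = P * kry A b := by
  ext i k
  simp only [kry, of_apply, conj_pow_mat _ _ _ h, mulVec_mulVec]
  rw [mul_assoc, h, mul_one, ← mulVec_mulVec]
  simp [mulVec, dotProduct, mul_apply]

lemma kry_diag {K : Type*} [Field K] {n : ℕ} (l m : Fin n → K) :
    kry (diagonal l) m = diagonal m * vandermonde l := by
  ext i k
  simp [kry, diagonal_pow, mulVec_diagonal, vandermonde_apply, mul_comm]

/-- Complexification of a real matrix. -/
abbrev cM {m n : Type*} (A : Matrix m n ℝ) : Matrix m n ℂ := A.map (fun r : ℝ => (r : ℂ))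

/-- Complexification of a real vector. -/
abbrev cV {m : Type*} (b : m → ℝ) : m → ℂ := fun i => (b i : ℂ)

lemma cM_mul {n : ℕ} (A B : Matrix (Fin n) (Fin n) ℝ) : cM (A * B) = cM A * cM B :=
  Matrix.map_mul (f := Complex.ofRealHom)

lemma cM_one {n : ℕ} : cM (1 : Matrix (Fin n) (Fin n) ℝ) = 1 :=
  Matrix.map_one (Complex.ofRealHom) (map_zero _) (map_one _)

lemma cM_pow {n : ℕ} (A : Matrix (Fin n) (Fin n) ℝ) (k : ℕ) : cM (A ^ k) = cM A ^ k := by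
  induction k with
  | zero => simp only [pow_zero, cM_one]
  | succ k ih => rw [pow_succ, cM_mul, ih, pow_succ]

lemma cV_mulVec {n : ℕ} (A : Matrix (Fin n) (Fin n) ℝ) (b : Fin n → ℝ) :
    cV (A *ᵥ b) = cM A *ᵥ cV b := by
  ext i; simp [cV, mulVec, dotProduct]

lemma cV_dot {n : ℕ} (a b : Fin n → ℝ) :
    ((a ⬝ᵥ b : ℝ) : ℂ) = cV a ⬝ᵥ cV b := by
  simp [dotProduct]

lemma cV_vecMul {n : ℕ} (A : Matrix (Fin n) (Fin n) ℝ) (b : Fin n → ℝ) :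
    cV (b ᵥ* A) = cV b ᵥ* cM A := by
  ext i; simp [cV, vecMul, dotProduct]

lemma kry_cM {n : ℕ} (A : Matrix (Fin n) (Fin n) ℝ) (b : Fin n → ℝ) :
    kry (cM A) (cV b) = cM (kry A b) := by
  ext i k
  simp only [kry, of_apply, ← cM_pow, ← cV_mulVec, map_apply]

lemma det_cM {n : ℕ} (A : Matrix (Fin n) (Fin n) ℝ) : (cM A).det = (A.det : ℂ) :=
  (RingHom.map_det Complex.ofRealHom A).symm

lemma det_kry_I {n : ℕ} (A : Matrix (Fin n) (Fin n) ℝ) (b : Fin n → ℝ) :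
    (kry (Complex.I • cM A) (Complex.I • cV b)).det ≠ 0 ↔ (kry A b).det ≠ 0 := by
  rw [det_kry_smul _ Complex.I_ne_zero, kry_cM, det_cM]
  norm_cast

lemma charpoly_smul_congr {K : Type*} [Field K] [Infinite K] {n : ℕ} (c : K) (hc : c ≠ 0)
    (M N : Matrix (Fin n) (Fin n) K) (h : M.charpoly = N.charpoly) :
    (c • M).charpoly = (c • N).charpoly := by
  have key : ∀ (M : Matrix (Fin n) (Fin n) K) (t : K),
      (c • M).charpoly.eval t = c ^ n * M.charpoly.eval (c⁻¹ * t) := by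
    intro M t
    rw [eval_charpoly, eval_charpoly]
    have : scalar (Fin n) t - c • M = c • (scalar (Fin n) (c⁻¹ * t) - M) := by
      rw [smul_sub]
      congr 1
      ext i j
      simp only [scalar_apply, diagonal_apply, Matrix.smul_apply, smul_eq_mul]
      split_ifs <;> simp [hc]
    rw [this, det_smul]
    simp
  apply Polynomial.funext
  intro t
  rw [key, key, h]

lemma charpoly_I {n : ℕ} (A B : Matrix (Fin n) (Fin n) ℝ)
    (h : (Complex.I • cM A).charpoly = (Complex.I • cM B).charpoly) :
    A.charpoly = B.charpoly := by
  have := charpoly_smul_congr (Complex.I)⁻¹ (inv_ne_zero Complex.I_ne_zero) _ _ h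
  rw [smul_smul, smul_smul, inv_mul_cancel₀ Complex.I_ne_zero, one_smul, one_smul] at this
  have e : ∀ A : Matrix (Fin n) (Fin n) ℝ, (cM A).charpoly = A.charpoly.map Complex.ofRealHom :=
    fun A => charpoly_map A Complex.ofRealHom
  rw [e, e] at this
  exact Polynomial.map_injective _ Complex.ofRealHom.injective this

lemma exists_conj {n : ℕ} (hn : 0 < n) (A D : Matrix (Fin n) (Fin n) ℝ) (b c m p : Fin n → ℝ)
    (hA : (kry A b).det ≠ 0) (hD : (kry D m).det ≠ 0) (hc : A.charpoly = D.charpoly)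
    (hi : ∀ k : Fin n, c ⬝ᵥ (A ^ (k : ℕ) *ᵥ b) = p ⬝ᵥ (D ^ (k : ℕ) *ᵥ m)) :
    ∃ g : GL (Fin n) ℝ, A = g.val * D * (g⁻¹).val ∧ b = g.val *ᵥ m ∧ c = p ᵥ* (g⁻¹).val := by
  let KA := GeneralLinearGroup.mkOfDetNeZero _ hA
  let KD := GeneralLinearGroup.mkOfDetNeZero _ hD
  let g := KA * KD⁻¹
  have hg : g.val * kry D m = kry A b := by
    have : g * KD = KA := by simp [g]
    exact congrArg Units.val this
  have h1 : ∀ j : Fin n, g.val *ᵥ (D ^ (j : ℕ) *ᵥ m) = A ^ (j : ℕ) *ᵥ b := by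
    intro j
    ext i
    have := congrFun (congrFun hg i) j
    simpa [mul_apply, kry, mulVec, dotProduct] using this
  have h2 : ∀ k : ℕ, g.val *ᵥ (D ^ k *ᵥ m) = A ^ k *ᵥ b := by
    intro k
    rw [pow_mulVec_eq_sum hn A, pow_mulVec_eq_sum hn D, mulVec_sum]
    refine Finset.sum_congr rfl fun j _ => ?_
    rw [mulVec_smul, h1, hc]
  have hmain : g.val * D = A * g.val := by
    have h3 : g.val * D * kry D m = A * g.val * kry D m := by
      rw [mul_assoc A, hg]
      ext i k
      have e1 := congrFun (h2 (k + 1)) i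
      rw [pow_succ', pow_succ', ← mulVec_mulVec, ← mulVec_mulVec, mulVec_mulVec] at e1
      exact e1
    have := congrArg (fun M => M * (kry D m)⁻¹) h3
    simpa [mul_assoc, mul_nonsing_inv _ (isUnit_iff_ne_zero.2 hD)] using this
  have hb : b = g.val *ᵥ m := by simpa using (h2 0).symm
  refine ⟨g, ?_, hb, ?_⟩
  · rw [hmain, mul_assoc, Units.mul_inv, mul_one]
  · have h4 : (c ᵥ* g.val) ᵥ* kry D m = p ᵥ* kry D m := by
      rw [vecMul_vecMul, hg]
      ext k
      exact hi k
    have h5 : c ᵥ* g.val = p := by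
      have := congrArg (fun v => v ᵥ* (kry D m)⁻¹) h4
      simpa [vecMul_vecMul, mul_assoc, mul_nonsing_inv _ (isUnit_iff_ne_zero.2 hD)] using this
    rw [← h5, vecMul_vecMul, Units.mul_inv, vecMul_one]
/-! ### Block computations -/

section blocks
variable {n : ℕ}

@[simp] lemma dgC_cc (g : Matrix (Fin n) (Fin n) ℂ) (i j : Fin n) :
    dgC g i.castSucc j.castSucc = g i j := by
  have h : ∀ i : Fin n, finSumFinEquiv.symm i.castSucc = (Sum.inl i : Fin n ⊕ Fin 1) :=
    fun i => finSumFinEquiv_symm_apply_castAdd i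
  simp [dgC, h]

@[simp] lemma dgC_cl (g : Matrix (Fin n) (Fin n) ℂ) (i : Fin n) :
    dgC g i.castSucc (Fin.last n) = 0 := by
  have h : ∀ i : Fin n, finSumFinEquiv.symm i.castSucc = (Sum.inl i : Fin n ⊕ Fin 1) :=
    fun i => finSumFinEquiv_symm_apply_castAdd i
  have h' : finSumFinEquiv.symm (Fin.last n) = (Sum.inr 0 : Fin n ⊕ Fin 1) :=
    finSumFinEquiv_symm_apply_natAdd 0
  simp [dgC, h, h']

@[simp] lemma dgC_lc (g : Matrix (Fin n) (Fin n) ℂ) (i : Fin n) :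
    dgC g (Fin.last n) i.castSucc = 0 := by
  have h : ∀ i : Fin n, finSumFinEquiv.symm i.castSucc = (Sum.inl i : Fin n ⊕ Fin 1) :=
    fun i => finSumFinEquiv_symm_apply_castAdd i
  have h' : finSumFinEquiv.symm (Fin.last n) = (Sum.inr 0 : Fin n ⊕ Fin 1) :=
    finSumFinEquiv_symm_apply_natAdd 0
  simp [dgC, h, h']

@[simp] lemma dgC_ll (g : Matrix (Fin n) (Fin n) ℂ) :
    dgC g (Fin.last n) (Fin.last n) = 1 := by
  have h' : finSumFinEquiv.symm (Fin.last n) = (Sum.inr 0 : Fin n ⊕ Fin 1) :=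
    finSumFinEquiv_symm_apply_natAdd 0
  simp [dgC, h']

lemma iArrow_blocks (lam mu : Fin n → ℝ) (d : ℝ) :
    blk0 (iArrow lam mu d) = Complex.I • cM (diagonal lam) ∧
    blkv (iArrow lam mu d) = Complex.I • cV mu ∧
    blkw (iArrow lam mu d) = Complex.I • cV mu ∧
    blkd (iArrow lam mu d) = Complex.I * d := by
  have h : ∀ i : Fin n, finSumFinEquiv.symm i.castSucc = (Sum.inl i : Fin n ⊕ Fin 1) :=
    fun i => finSumFinEquiv_symm_apply_castAdd i
  have h' : finSumFinEquiv.symm (Fin.last n) = (Sum.inr 0 : Fin n ⊕ Fin 1) :=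
    finSumFinEquiv_symm_apply_natAdd 0
  refine ⟨?_, ?_, ?_, ?_⟩
  · ext i j; simp [blk0, iArrow, iM, arrow, h]; simp only [diagonal_apply]; split_ifs <;> simp
  · ext i; simp [blkv, iArrow, iM, arrow, h, h', cV]
  · ext i; simp [blkw, iArrow, iM, arrow, h, h', cV]
  · simp [blkd, iArrow, iM, arrow, h']

lemma mact_blocks (g : GL (Fin n) ℝ) (y : Matrix (Fin (n+1)) (Fin (n+1)) ℂ) :
    blk0 (mact g y) = cM g.val * blk0 y * cM (g⁻¹).val ∧
    blkv (mact g y) = cM g.val *ᵥ blkv y ∧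
    blkw (mact g y) = blkw y ᵥ* cM (g⁻¹).val ∧
    blkd (mact g y) = blkd y := by
  refine ⟨?_, ?_, ?_, ?_⟩
  · ext i j; simp [blk0, mact, mul_apply, Fin.sum_univ_castSucc]
  · ext i; simp [blkv, mact, mul_apply, Fin.sum_univ_castSucc, mulVec, dotProduct]
  · ext i; simp [blkw, mact, mul_apply, Fin.sum_univ_castSucc, vecMul, dotProduct]
  · simp [blkd, mact, mul_apply, Fin.sum_univ_castSucc]

lemma ext_blocks (y z : Matrix (Fin (n+1)) (Fin (n+1)) ℂ) (h0 : blk0 y = blk0 z)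
    (hv : blkv y = blkv z) (hw : blkw y = blkw z) (hd : blkd y = blkd z) : y = z := by
  ext i j
  induction i using Fin.lastCases with
  | last =>
    induction j using Fin.lastCases with
    | last => exact hd
    | cast j => exact congrFun hw j
  | cast i =>
    induction j using Fin.lastCases with
    | last => exact congrFun hv i
    | cast j => exact congrFun (congrFun h0 i) j

/-- real blocks -/
def rA (y : Matrix (Fin (n+1)) (Fin (n+1)) ℂ) : Matrix (Fin n) (Fin n) ℝ :=
  Matrix.of fun i j => (y i.castSucc j.castSucc).im
/-- real blocks -/
def rb (y : Matrix (Fin (n+1)) (Fin (n+1)) ℂ) : Fin n → ℝ :=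
  fun i => (y i.castSucc (Fin.last n)).im
/-- real blocks -/
def rc (y : Matrix (Fin (n+1)) (Fin (n+1)) ℂ) : Fin n → ℝ :=
  fun i => (y (Fin.last n) i.castSucc).im

lemma sSet_entry {y : Matrix (Fin (n+1)) (Fin (n+1)) ℂ} (hy : y ∈ sSet n) (i j) :
    y i j = Complex.I * ((y i j).im : ℂ) := by
  have h := congrFun (congrFun (show y + y.map (starRingEnd ℂ) = 0 from hy) i) j
  have h2 := congrArg Complex.re h
  simp at h2
  apply Complex.ext <;> simp
  linarith

lemma sSet_blocks {y : Matrix (Fin (n+1)) (Fin (n+1)) ℂ} (hy : y ∈ sSet n) :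
    blk0 y = Complex.I • cM (rA y) ∧ blkv y = Complex.I • cV (rb y) ∧
    blkw y = Complex.I • cV (rc y) := by
  refine ⟨?_, ?_, ?_⟩
  · ext i j; simpa [blk0, rA] using sSet_entry hy i.castSucc j.castSucc
  · ext i; simpa [blkv, rb, cV] using sSet_entry hy i.castSucc (Fin.last n)
  · ext i; simpa [blkw, rc, cV] using sSet_entry hy (Fin.last n) i.castSucc

lemma inv_I (A : Matrix (Fin n) (Fin n) ℝ) (b c : Fin n → ℝ) (k : ℕ) :
    (Complex.I • cV c) ⬝ᵥ ((Complex.I • cM A) ^ k *ᵥ (Complex.I • cV b)) =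
      Complex.I ^ (k + 2) * ((c ⬝ᵥ (A ^ k *ᵥ b) : ℝ) : ℂ) := by
  rw [cV_dot, cV_mulVec, cM_pow, smul_pow, smul_mulVec, mulVec_smul, smul_dotProduct,
    dotProduct_smul, dotProduct_smul]
  simp only [smul_eq_mul]
  ring

lemma conj_of_inv (hn : 0 < n) {y z : Matrix (Fin (n+1)) (Fin (n+1)) ℂ} (hy : y ∈ sSet n)
    (hz : z ∈ sSet n) (ky : (kry (blk0 y) (blkv y)).det ≠ 0)
    (kz : (kry (blk0 z) (blkv z)).det ≠ 0) (h : InvS y = InvS z) :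
    ∃ g : GL (Fin n) ℝ, y = mact g z := by
  obtain ⟨y0, yv, yw⟩ := sSet_blocks hy
  obtain ⟨z0, zv, zw⟩ := sSet_blocks hz
  rw [y0, yv, det_kry_I] at ky
  rw [z0, zv, det_kry_I] at kz
  simp only [InvS, Prod.mk.injEq] at h
  obtain ⟨h1, h2, h3⟩ := h
  rw [y0, z0] at h1
  obtain ⟨g, e1, e2, e3⟩ := exists_conj hn (rA y) (rA z) (rb y) (rc y) (rb z) (rc z) ky kz
    (charpoly_I _ _ h1) (by
      intro k
      have := congrFun h2 k
      simp only [y0, z0, yv, zv, yw, zw, inv_I] at this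
      have := mul_left_cancel₀ (pow_ne_zero _ Complex.I_ne_zero) this
      exact_mod_cast this)
  refine ⟨g, ?_⟩
  obtain ⟨m0, mv, mw, md⟩ := mact_blocks g z
  apply ext_blocks
  · rw [m0, y0, z0, e1, cM_mul, cM_mul]; simp
  · rw [mv, yv, zv, e2, cV_mulVec, mulVec_smul]
  · rw [mw, yw, zw, e3, cV_vecMul, smul_vecMul]
  · rw [md, h3]

lemma iArrow_mem_sSet (lam mu : Fin n → ℝ) (d : ℝ) : iArrow lam mu d ∈ sSet n := by
  show _ + _ = _
  ext i j
  simp [iArrow, iM]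

lemma iArrow_mem_uSet (lam mu : Fin n → ℝ) (d : ℝ) : iArrow lam mu d ∈ uSet n := by
  have hs : (arrow lam mu d)ᵀ = arrow lam mu d := by
    simp only [arrow, reindex_apply, transpose_submatrix, fromBlocks_transpose,
      diagonal_transpose]
    rfl
  show _ᴴ = _
  ext i j
  have := congrFun (congrFun hs i) j
  rw [transpose_apply] at this
  simp [iArrow, iM, this]

lemma cM_inv_mul (g : GL (Fin n) ℝ) : cM (g⁻¹).val * cM g.val = 1 := by
  rw [← cM_mul, Units.inv_mul, cM_one]

lemma mact_mem_sSet (g : GL (Fin n) ℝ) {y : Matrix (Fin (n+1)) (Fin (n+1)) ℂ}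
    (hy : y ∈ sSet n) : mact g y ∈ sSet n := by
  have hd : ∀ A : Matrix (Fin n) (Fin n) ℝ, (dgC (cM A)).map (starRingEnd ℂ) = dgC (cM A) := by
    intro A
    apply ext_blocks
    · ext i j; simp [blk0]
    · ext i; simp [blkv]
    · ext i; simp [blkw]
    · simp [blkd]
  have hy' : y.map (starRingEnd ℂ) = -y := by
    exact eq_neg_of_add_eq_zero_right hy
  show _ + _ = _
  rw [mact, Matrix.map_mul, Matrix.map_mul, hd, hd, hy']
  simp

lemma InvS_mact (g : GL (Fin n) ℝ) (y : Matrix (Fin (n+1)) (Fin (n+1)) ℂ) :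
    InvS (mact g y) = InvS y := by
  obtain ⟨m0, mv, mw, md⟩ := mact_blocks g y
  have hg := cM_inv_mul g
  simp only [InvS, m0, mv, mw, md, Prod.mk.injEq, and_true]
  constructor
  · rw [charpoly_mul_comm, ← mul_assoc, hg, one_mul]
  · ext k
    rw [conj_pow_mat _ _ _ hg, mulVec_mulVec, mul_assoc, hg, mul_one, ← mulVec_mulVec,
      ← dotProduct_mulVec, mulVec_mulVec, hg, one_mulVec]

lemma InvS_iArrow (lam mu : Fin n → ℝ) (d : ℝ) :
    InvS (iArrow lam mu d) = InvU (iArrow lam mu d) := by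
  obtain ⟨m0, mv, mw, md⟩ := iArrow_blocks lam mu d
  simp only [InvS, InvU, Prod.mk.injEq, and_true, true_and]
  ext k
  have : star (blkv (iArrow lam mu d)) = - blkw (iArrow lam mu d) := by
    rw [mv, mw]; ext i; simp [cV]
  rw [this]; simp

lemma det_kry_arrow_pos {lam mu : Fin n → ℝ} (hl : StrictMono lam) (hm : ∀ i, 0 < mu i) :
    0 < (kry (diagonal lam) mu).det := by
  rw [kry_diag, det_mul, det_diagonal, det_vandermonde]
  refine mul_pos (Finset.prod_pos fun i _ => hm i) (Finset.prod_pos fun i _ =>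
    Finset.prod_pos fun j hj => ?_)
  exact sub_pos.2 (hl (Finset.mem_Ioi.1 hj))

lemma det_cM_GL (g : GL (Fin n) ℝ) : (cM g.val).det ≠ 0 := by
  rw [det_cM]; exact_mod_cast det_GL_ne g

lemma mact_mem_frakS (hn : 0 < n) (g : GL (Fin n) ℝ) {lam mu : Fin n → ℝ} (d : ℝ)
    (hl : StrictMono lam) (hm : ∀ i, 0 < mu i) : mact g (iArrow lam mu d) ∈ frakS n := by
  obtain ⟨m0, mv, mw, md⟩ := mact_blocks g (iArrow lam mu d)
  obtain ⟨a0, av, aw, ad⟩ := iArrow_blocks lam mu d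
  have hg := cM_inv_mul g
  have hg' : cM g.val * cM (g⁻¹).val = 1 := mul_eq_one_comm.1 hg
  have hpos := (det_kry_arrow_pos hl hm).ne'
  refine ⟨mact_mem_sSet g (iArrow_mem_sSet _ _ _), ⟨?_, ?_⟩,
    iArrow lam mu d, iArrow_mem_uSet _ _ _, ?_, ?_⟩
  · rw [span_iff hn, m0, mv, kry_conj _ _ _ _ hg, det_mul, a0, av]
    exact mul_ne_zero (det_cM_GL g) ((det_kry_I _ _).2 hpos)
  · rw [span_iff' hn, m0, mw, transpose_mul, transpose_mul, ← mul_assoc, ← mulVec_transpose,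
      kry_conj _ _ _ _ (by rw [← transpose_mul, hg, transpose_one]), det_mul, a0, aw,
      det_transpose]
    refine mul_ne_zero (det_cM_GL g⁻¹) ?_
    have : (Complex.I • cM (diagonal lam))ᵀ = Complex.I • cM (diagonal lam) := by
      rw [transpose_smul, ← transpose_map, diagonal_transpose]
    rw [this]
    exact (det_kry_I _ _).2 hpos
  · rw [RSspanU, span_iff hn, a0, av]
    exact (det_kry_I _ _).2 hpos
  · rw [InvS_mact, InvS_iArrow]

/-- The discriminating function. -/
def Dl (y : Matrix (Fin (n+1)) (Fin (n+1)) ℂ) : ℝ := (kry (rA y) (rb y)).det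

lemma Dl_mact (g : GL (Fin n) ℝ) {y : Matrix (Fin (n+1)) (Fin (n+1)) ℂ} (hy : y ∈ sSet n) :
    Dl (mact g y) = g.val.det * Dl y := by
  obtain ⟨m0, mv, mw, md⟩ := mact_blocks g y
  obtain ⟨a0, av, aw⟩ := sSet_blocks hy
  have e1 : rA (mact g y) = g.val * rA y * (g⁻¹).val := by
    ext i j
    have := congrFun (congrFun m0 i) j
    rw [a0, mul_smul_comm, smul_mul_assoc, ← cM_mul, ← cM_mul] at this
    have := congrArg Complex.im this
    simpa [blk0, rA] using this
  have e2 : rb (mact g y) = g.val *ᵥ rb y := by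
    ext i
    have := congrFun mv i
    rw [av, mulVec_smul, ← cV_mulVec] at this
    have := congrArg Complex.im this
    simpa [blkv, rb, cV] using this
  rw [Dl, e1, e2, kry_conj _ _ _ _ (Units.inv_mul g), det_mul, Dl]

lemma Dl_iArrow_pos {lam mu : Fin n → ℝ} (d : ℝ)
    (hl : StrictMono lam) (hm : ∀ i, 0 < mu i) : 0 < Dl (iArrow lam mu d) := by
  obtain ⟨a0, av, aw, ad⟩ := iArrow_blocks lam mu d
  have e1 : rA (iArrow lam mu d) = diagonal lam := by
    ext i j
    have := congrArg Complex.im (congrFun (congrFun a0 i) j)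
    simp [blk0, rA] at this ⊢
    rw [this]; simp only [diagonal_apply]; split_ifs <;> simp
  have e2 : rb (iArrow lam mu d) = mu := by
    ext i
    have := congrArg Complex.im (congrFun av i)
    simpa [blkv, rb, cV] using this
  rw [Dl, e1, e2]
  exact det_kry_arrow_pos hl hm

lemma continuous_Dl : Continuous (Dl (n := n)) := by
  refine Continuous.matrix_det ?_
  refine continuous_matrix fun i k => ?_
  have hA : Continuous (rA (n := n)) := by
    refine continuous_matrix fun i j => ?_
    exact Complex.continuous_im.comp ((continuous_apply _).comp (continuous_apply _))
  have hb : Continuous (rb (n := n)) := by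
    refine continuous_pi fun i => ?_
    exact Complex.continuous_im.comp ((continuous_apply _).comp (continuous_apply _))
  have : Continuous (fun y => (rA (n := n) y) ^ (k : ℕ) *ᵥ rb y) :=
    (hA.pow _).matrix_mulVec hb
  exact (continuous_apply i).comp this

lemma continuous_param :
    Continuous (fun p : GL (Fin n) ℝ × (Fin n → ℝ) × (Fin n → ℝ) × ℝ =>
      mact p.1 (iArrow p.2.1 p.2.2.1 p.2.2.2)) := by
  have hdg : Continuous (fun A : Matrix (Fin n) (Fin n) ℝ => dgC (cM A)) := by
    refine Continuous.matrix_reindex ?_ _ _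
    refine Continuous.matrix_fromBlocks ?_ continuous_const continuous_const continuous_const
    exact continuous_id.matrix_map Complex.continuous_ofReal
  have h1 : Continuous (fun g : GL (Fin n) ℝ => dgC (cM g.val)) :=
    hdg.comp Units.continuous_val
  have h2 : Continuous (fun g : GL (Fin n) ℝ => dgC (cM (g⁻¹).val)) :=
    h1.comp continuous_inv
  have h3 : Continuous (fun p : (Fin n → ℝ) × (Fin n → ℝ) × ℝ => iArrow p.1 p.2.1 p.2.2) := by
    show Continuous (fun p : (Fin n → ℝ) × (Fin n → ℝ) × ℝ =>
      Complex.I • cM (arrow p.1 p.2.1 p.2.2))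
    suffices ha : Continuous (fun p : (Fin n → ℝ) × (Fin n → ℝ) × ℝ => arrow p.1 p.2.1 p.2.2) from
      (ha.matrix_map Complex.continuous_ofReal).const_smul Complex.I
    refine Continuous.matrix_reindex ?_ _ _
    refine Continuous.matrix_fromBlocks ?_ ?_ ?_ ?_
    · exact continuous_fst.matrix_diagonal
    · refine continuous_matrix fun i j => ?_
      simp only [of_apply]; fun_prop
    · refine continuous_matrix fun i j => ?_
      simp only [of_apply]; fun_prop
    · refine continuous_matrix fun i j => ?_
      simp only [of_apply]; fun_prop
  exact ((h1.comp continuous_fst).mul (h3.comp continuous_snd)).mul (h2.comp continuous_fst)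

lemma unitary_diag (hn : 0 < n) {x : Matrix (Fin (n+1)) (Fin (n+1)) ℂ} (hx : x ∈ uSet n)
    (hs : RSspanU x) : ∃ (lam mu : Fin n → ℝ) (d : ℝ), StrictMono lam ∧ (∀ i, 0 < mu i) ∧
      InvU x = InvS (iArrow lam mu d) := by
  have hx' : ∀ i j, (starRingEnd ℂ) (x j i) = - x i j := fun i j =>
    congrFun (congrFun (show xᴴ = -x from hx) i) j
  obtain ⟨X, hX⟩ : ∃ X, X = (-Complex.I) • blk0 x := ⟨_, rfl⟩
  obtain ⟨u, hu⟩ : ∃ u, u = (-Complex.I) • blkv x := ⟨_, rfl⟩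
  have hX0 : blk0 x = Complex.I • X := by rw [hX, smul_smul]; simp
  have hu0 : blkv x = Complex.I • u := by rw [hu, smul_smul]; simp
  have hH : X.IsHermitian := by
    ext i j
    simp [hX, blk0, hx']
  have hk : (kry X u).det ≠ 0 := by
    rw [RSspanU, span_iff hn, hX0, hu0, det_kry_smul _ Complex.I_ne_zero] at hs
    exact hs
  obtain ⟨l, hl⟩ : ∃ l, l = hH.eigenvalues := ⟨_, rfl⟩
  obtain ⟨U, hU⟩ : ∃ U : Matrix (Fin n) (Fin n) ℂ, U = hH.eigenvectorUnitary.val := ⟨_, rfl⟩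
  have hUU : Uᴴ * U = 1 := by
    rw [hU]; exact Unitary.coe_star_mul_self hH.eigenvectorUnitary
  have hUU' : U * Uᴴ = 1 := mul_eq_one_comm.1 hUU
  have hsp : X = U * diagonal (cV l) * Uᴴ := by
    have := hH.spectral_theorem
    rw [Unitary.conjStarAlgAut_apply] at this
    rw [hU, hl]
    exact this
  obtain ⟨nu, hnu⟩ : ∃ nu, nu = Uᴴ *ᵥ u := ⟨_, rfl⟩
  have hu1 : u = U *ᵥ nu := by rw [hnu, mulVec_mulVec, hUU', one_mulVec]
  have hk2 := hk
  rw [hu1, hsp, kry_conj _ _ _ _ hUU, kry_diag, det_mul, det_mul, det_diagonal] at hk2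
  have hnu0 : ∀ i, nu i ≠ 0 := fun i =>
    Finset.prod_ne_zero_iff.1 (left_ne_zero_of_mul (right_ne_zero_of_mul hk2)) i
      (Finset.mem_univ i)
  have hinj : Function.Injective l := by
    have := det_vandermonde_ne_zero_iff.1 (right_ne_zero_of_mul (right_ne_zero_of_mul hk2))
    intro i j hij
    exact this (by simp [cV, hij])
  let s := Tuple.sort l
  refine ⟨l ∘ s, fun i => ‖nu (s i)‖, (blkd x).im,
    (Tuple.monotone_sort l).strictMono_of_injective (hinj.comp s.injective),
    fun i => norm_pos_iff.2 (hnu0 _), ?_⟩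
  obtain ⟨a0, av, aw, ad⟩ := iArrow_blocks (l ∘ s) (fun i => ‖nu (s i)‖) (blkd x).im
  simp only [InvU, InvS, Prod.mk.injEq]
  refine ⟨?_, ?_, ?_⟩
  · rw [a0, hX0]
    apply charpoly_smul_congr _ Complex.I_ne_zero
    have e : cM (diagonal (l ∘ s)) = diagonal (cV (l ∘ s)) := by
      ext i j; simp only [map_apply, diagonal_apply]; split_ifs <;> simp [cV]
    rw [e, charpoly_diagonal, hH.charpoly_eq, ← hl]
    exact (Equiv.prod_comp s (fun i => Polynomial.X - Polynomial.C ((l i : ℝ) : ℂ))).symm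
  · ext k
    have hstar : star (Complex.I • u) = (-Complex.I) • star u := by ext i; simp
    rw [a0, av, aw, inv_I, hX0, hu0, hstar, smul_pow, smul_mulVec, mulVec_smul, smul_dotProduct,
      dotProduct_smul, dotProduct_smul]
    have e1 : star u ⬝ᵥ (X ^ (k : ℕ) *ᵥ u) = ∑ i, ((l i ^ (k : ℕ) * ‖nu i‖ ^ 2 : ℝ) : ℂ) := by
      rw [hsp, conj_pow_mat _ _ _ hUU, mul_assoc, ← mulVec_mulVec, ← mulVec_mulVec, ← hnu,
        dotProduct_mulVec]
      have : star u ᵥ* U = star nu := by rw [hnu, star_mulVec, conjTranspose_conjTranspose]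
      rw [this, diagonal_pow]
      refine Finset.sum_congr rfl fun i _ => ?_
      rw [mulVec_diagonal]
      have := Complex.conj_mul' (nu i)
      simp only [Pi.star_apply, Pi.pow_apply, cV, RCLike.star_def]
      push_cast
      rw [← this]; ring
    have e2 : (fun i => ‖nu (s i)‖) ⬝ᵥ (diagonal (l ∘ s) ^ (k : ℕ) *ᵥ (fun i => ‖nu (s i)‖)) =
        ∑ i, (l i ^ (k : ℕ) * ‖nu i‖ ^ 2 : ℝ) := by
      rw [← Equiv.sum_comp s, diagonal_pow]
      refine Finset.sum_congr rfl fun i _ => ?_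
      rw [mulVec_diagonal]
      simp only [Pi.pow_apply, Function.comp]
      ring
    rw [e1, e2]
    push_cast
    simp only [smul_eq_mul]
    ring
  · rw [ad]
    have := hx' (Fin.last n) (Fin.last n)
    have := congrArg Complex.re this
    simp at this
    apply Complex.ext <;> simp [blkd]
    linarith

lemma frakS_param (hn : 0 < n) {y : Matrix (Fin (n+1)) (Fin (n+1)) ℂ} (hy : y ∈ frakS n) :
    ∃ (g : GL (Fin n) ℝ) (lam mu : Fin n → ℝ) (d : ℝ), StrictMono lam ∧ (∀ i, 0 < mu i) ∧
      y = mact g (iArrow lam mu d) := by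
  obtain ⟨h1, h2, x, hx, hxs, hi⟩ := hy
  obtain ⟨lam, mu, d, hl, hm, he⟩ := unitary_diag hn hx hxs
  obtain ⟨a0, av, aw, ad⟩ := iArrow_blocks lam mu d
  obtain ⟨g, hg⟩ := conj_of_inv hn h1 (iArrow_mem_sSet lam mu d) ((span_iff hn _ _).1 h2.1)
    (by rw [a0, av, det_kry_I]; exact (det_kry_arrow_pos hl hm).ne') (hi.trans he)
  exact ⟨g, lam, mu, d, hl, hm, hg⟩

/-- The contractible set of arrow parameters. -/
def parS (n : ℕ) : Set ((Fin n → ℝ) × (Fin n → ℝ) × ℝ) :=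
  {l | StrictMono l} ×ˢ ({m | ∀ i, 0 < m i} ×ˢ Set.univ)

lemma parS_preconn : IsPreconnected (parS n) := by
  refine Convex.isPreconnected ?_
  refine Convex.prod ?_ (Convex.prod ?_ convex_univ)
  · intro a ha b hb s t hs ht hst i j hij
    have h1 := ha hij
    have h2 := hb hij
    simp only [Pi.add_apply, Pi.smul_apply, smul_eq_mul]
    rcases hs.eq_or_lt with rfl | hs
    · have : t = 1 := by linarith
      subst this; linarith
    · nlinarith [mul_lt_mul_of_pos_left h1 hs, mul_le_mul_of_nonneg_left h2.le ht]
  · intro a ha b hb s t hs ht hst i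
    have h1 := ha i
    have h2 := hb i
    simp only [Pi.add_apply, Pi.smul_apply, smul_eq_mul]
    rcases hs.eq_or_lt with rfl | hs
    · have : t = 1 := by linarith
      subst this; linarith
    · nlinarith [mul_pos hs h1, mul_nonneg ht h2.le]

lemma half_image (hn : 0 < n) (P : ℝ → Prop) (hP : ∀ a b : ℝ, 0 < b → (P (a * b) ↔ P a)) :
    {y | y ∈ frakS n ∧ P (Dl y)} =
    (fun p : GL (Fin n) ℝ × (Fin n → ℝ) × (Fin n → ℝ) × ℝ =>
      mact p.1 (iArrow p.2.1 p.2.2.1 p.2.2.2)) '' ({g : GL (Fin n) ℝ | P g.val.det} ×ˢ parS n) := by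
  ext y
  constructor
  · rintro ⟨hy, hp⟩
    obtain ⟨g, lam, mu, d, hl, hm, rfl⟩ := frakS_param hn hy
    rw [Dl_mact g (iArrow_mem_sSet _ _ _), hP _ _ (Dl_iArrow_pos d hl hm)] at hp
    exact ⟨(g, lam, mu, d), ⟨hp, hl, hm, trivial⟩, rfl⟩
  · rintro ⟨⟨g, lam, mu, d⟩, ⟨hp, hl, hm, -⟩, rfl⟩
    refine ⟨mact_mem_frakS hn g d hl hm, ?_⟩
    simp only
    rw [Dl_mact g (iArrow_mem_sSet _ _ _), hP _ _ (Dl_iArrow_pos d hl hm)]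
    exact hp

lemma preconn_Spos (hn : 0 < n) : IsPreconnected {y | y ∈ frakS n ∧ 0 < Dl y} := by
  rw [half_image hn (fun a => 0 < a) (fun a b hb => by simp [hb])]
  exact ((preconn_pos hn).prod parS_preconn).image _ continuous_param.continuousOn

lemma preconn_Sneg (hn : 0 < n) : IsPreconnected {y | y ∈ frakS n ∧ Dl y < 0} := by
  rw [half_image hn (fun a => a < 0) (fun a b hb => by
    constructor <;> intro h <;> nlinarith)]
  exact ((preconn_neg hn).prod parS_preconn).image _ continuous_param.continuousOn

lemma Dl_ne (hn : 0 < n) {y : Matrix (Fin (n+1)) (Fin (n+1)) ℂ} (hy : y ∈ frakS n) :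
    Dl y ≠ 0 := by
  obtain ⟨g, lam, mu, d, hl, hm, rfl⟩ := frakS_param hn hy
  rw [Dl_mact g (iArrow_mem_sSet _ _ _)]
  exact mul_ne_zero (det_GL_ne g) (Dl_iArrow_pos d hl hm).ne'

lemma same_sign (hn : 0 < n) {y z : Matrix (Fin (n+1)) (Fin (n+1)) ℂ} (hy : y ∈ frakS n)
    (hz : z ∈ connectedComponentIn (frakS n) y) (h1 : Dl y < 0) : Dl z < 0 := by
  by_contra h
  obtain ⟨t, ht, h0⟩ := (isPreconnected_connectedComponentIn (F := frakS n) (x := y)).intermediate_value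
    (mem_connectedComponentIn hy) hz continuous_Dl.continuousOn
    (show (0 : ℝ) ∈ _ from ⟨h1.le, not_lt.1 h⟩)
  exact Dl_ne hn (connectedComponentIn_subset _ _ ht) h0

lemma comp_neg (hn : 0 < n) {y : Matrix (Fin (n+1)) (Fin (n+1)) ℂ} (hy : y ∈ frakS n)
    (h : Dl y < 0) : connectedComponentIn (frakS n) y = {y | y ∈ frakS n ∧ Dl y < 0} := by
  apply Set.Subset.antisymm
  · intro z hz
    exact ⟨connectedComponentIn_subset _ _ hz, same_sign hn hy hz h⟩
  · exact (preconn_Sneg hn).subset_connectedComponentIn ⟨hy, h⟩ (fun z hz => hz.1)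

lemma comp_pos (hn : 0 < n) {y : Matrix (Fin (n+1)) (Fin (n+1)) ℂ} (hy : y ∈ frakS n)
    (h : 0 < Dl y) : connectedComponentIn (frakS n) y = {y | y ∈ frakS n ∧ 0 < Dl y} := by
  apply Set.Subset.antisymm
  · intro z hz
    have hzS := connectedComponentIn_subset _ _ hz
    refine ⟨hzS, ?_⟩
    by_contra h'
    have h2 : Dl z < 0 := lt_of_le_of_ne (not_lt.1 h') (Dl_ne hn hzS)
    have := same_sign hn hzS (z := y)
      (by rw [← connectedComponentIn_eq hz]; exact mem_connectedComponentIn hy) h2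
    linarith
  · exact (preconn_Spos hn).subset_connectedComponentIn ⟨hy, h⟩ (fun z hz => hz.1)

end blocks

/-- `𝔖` has exactly two connected components, interchanged by conjugation
by any `g ∈ GL_n(ℝ)` with `det g < 0`. -/
theorem stmt5 (n : ℕ) (hn : 0 < n) :
    Set.ncard {C : Set (Matrix (Fin (n+1)) (Fin (n+1)) ℂ) |
        ∃ y ∈ frakS n, C = connectedComponentIn (frakS n) y} = 2 ∧
    ∀ g : GL (Fin n) ℝ, (g : Matrix (Fin n) (Fin n) ℝ).det < 0 →
      ∀ y ∈ frakS n,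
        connectedComponentIn (frakS n) (mact g y) ≠ connectedComponentIn (frakS n) y := by
  obtain ⟨g₁, hg₁⟩ : ∃ g : GL (Fin n) ℝ, g.val.det < 0 := ⟨sgU {⟨0, hn⟩}, by
    rw [det_sgU]; norm_num⟩
  have hl : StrictMono (fun i : Fin n => ((i : ℕ) : ℝ)) := fun i j h => by
    simpa using h
  have hm : ∀ i : Fin n, (0 : ℝ) < (fun _ => 1 : Fin n → ℝ) i := fun i => one_pos
  have hpos : ∃ y ∈ frakS n, 0 < Dl y := by
    refine ⟨_, mact_mem_frakS hn 1 0 hl hm, ?_⟩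
    rw [Dl_mact 1 (iArrow_mem_sSet _ _ _)]
    simpa using Dl_iArrow_pos 0 hl hm
  have hneg : ∃ y ∈ frakS n, Dl y < 0 := by
    refine ⟨_, mact_mem_frakS hn g₁ 0 hl hm, ?_⟩
    rw [Dl_mact g₁ (iArrow_mem_sSet _ _ _)]
    exact mul_neg_of_neg_of_pos hg₁ (Dl_iArrow_pos 0 hl hm)
  have hne : {y | y ∈ frakS n ∧ 0 < Dl y} ≠ {y | y ∈ frakS n ∧ Dl y < 0} := by
    intro h
    obtain ⟨y, hy, hp⟩ := hpos
    have : y ∈ {y | y ∈ frakS n ∧ Dl y < 0} := h ▸ (show y ∈ {y | y ∈ frakS n ∧ 0 < Dl y} from ⟨hy, hp⟩)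
    exact lt_asymm this.2 hp
  constructor
  · have : {C : Set (Matrix (Fin (n+1)) (Fin (n+1)) ℂ) |
        ∃ y ∈ frakS n, C = connectedComponentIn (frakS n) y} =
        {{y | y ∈ frakS n ∧ 0 < Dl y}, {y | y ∈ frakS n ∧ Dl y < 0}} := by
      ext C
      constructor
      · rintro ⟨y, hy, rfl⟩
        rcases (Dl_ne hn hy).lt_or_gt with h | h
        · right; exact comp_neg hn hy h
        · left; exact comp_pos hn hy h
      · rintro (rfl | rfl)
        · obtain ⟨y, hy, hp⟩ := hpos
          exact ⟨y, hy, (comp_pos hn hy hp).symm⟩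
        · obtain ⟨y, hy, hp⟩ := hneg
          exact ⟨y, hy, (comp_neg hn hy hp).symm⟩
    rw [this]
    exact Set.ncard_pair hne
  · intro g hg y hy heq
    have hmem : mact g y ∈ frakS n := by
      have : (connectedComponentIn (frakS n) (mact g y)).Nonempty := by
        rw [heq]; exact ⟨y, mem_connectedComponentIn hy⟩
      exact connectedComponentIn_nonempty_iff.1 this
    have hD := Dl_mact g hy.1
    rcases (Dl_ne hn hy).lt_or_gt with h | h
    · rw [comp_neg hn hy h, comp_pos hn hmem (by rw [hD]; exact mul_pos_of_neg_of_neg hg h)] at heq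
      exact hne heq
    · rw [comp_pos hn hy h, comp_neg hn hmem (by rw [hD]; exact mul_neg_of_neg_of_pos hg h)] at heq
      exact hne heq.symm

end
end
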